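/- Suppose C(x,y) = y₁·F(x₁,…,x_r) + Σ_{j=1}^{m} x_j q_j(y) + R(y), where F is a nonsingular positive definite integral quadratic form in r variables with 5 ≤ r ≤ m, and suppose that the polynomial y₁ divides q_i(y) in ℤ[y₁,…,y_h] for every 1 ≤ i ≤ r. Then there exist c > 0 and B₀ such that N(B) ≥ c · B^{r−2+(2/3)(n−r−1)} for all B ≥ B₀. -/

import Mathlib

open MvPolynomial

section

namespace CM
open Complex Filter Topology MeasureTheory

theorem summable_quad {a : ℂ} (ha : 0 < a.re) (b : ℂ) :
    Summable fun n : ℤ => cexp (-Real.pi * a * n ^ 2 + 2 * Real.pi * b * n) := by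
  have h := (hasSum_jacobiTheta₂_term (-I * b) (τ := I * a) (by simpa using ha)).summable
  refine h.congr ?_
  intro n
  simp only [jacobiTheta₂_term]
  congr 1
  linear_combination (-2 * Real.pi * n * b + Real.pi * n ^ 2 * a) * I_sq

/-- the weighted theta series -/
noncomputable def th (b d : ℤ) (Y α : ℝ) : ℂ :=
  ∑' t : ℤ, cexp (-Real.pi * b / Y * t ^ 2 + 2 * Real.pi * I * (α * (d * t + b * t ^ 2)))

/-- twisted Gauss sums -/
noncomputable def gs (b d : ℤ) (q : ℕ) (a k : ℤ) : ℂ :=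
  ∑ s : Fin q, cexp (2 * Real.pi * I * ((a * (d * (s : ℕ) + b * (s : ℕ) ^ 2) + k * (s : ℕ)) / q))

noncomputable def AA (b : ℤ) (Y β : ℝ) : ℂ := b * (1 / Y - 2 * I * β)

theorem AA_re {b : ℤ} {Y : ℝ} (β : ℝ) : (AA b Y β).re = b / Y := by
  have : AA b Y β = ((b / Y : ℝ) : ℂ) + ((-2 * b * β : ℝ) : ℂ) * I := by
    simp only [AA]; push_cast; ring
  rw [this]; simp

theorem AA_re_pos {b : ℤ} {Y : ℝ} (hb : 0 < b) (hY : 0 < Y) (β : ℝ) : 0 < (AA b Y β).re := by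
  rw [AA_re]
  have : (0:ℝ) < b := by exact_mod_cast hb
  positivity

theorem exp_int (z : ℂ) (n : ℤ) : cexp (2 * Real.pi * I * (z + n)) = cexp (2 * Real.pi * I * z) := by
  rw [mul_add, Complex.exp_add, show 2 * Real.pi * I * (n : ℂ) = n * (2 * Real.pi * I) by ring,
    Complex.exp_int_mul_two_pi_mul_I, mul_one]

theorem th_summable {b : ℤ} (d : ℤ) {Y : ℝ} (hb : 0 < b) (hY : 0 < Y) (α : ℝ) :
    Summable fun t : ℤ => cexp (-Real.pi * b / Y * t ^ 2 + 2 * Real.pi * I * (α * (d * t + b * t ^ 2))) := by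
  refine (summable_quad (AA_re_pos hb hY α) (I * α * d)).congr ?_
  intro t
  congr 1
  simp only [AA]
  ring

theorem th_rat {b : ℤ} (d : ℤ) {Y : ℝ} (hb : 0 < b) (hY : 0 < Y) (q : ℕ) (hq : 0 < q) (a : ℤ) (β : ℝ) :
    th b d Y (a / q + β) = 1 / (AA b Y β * q ^ 2) ^ (1 / 2 : ℂ) *
      ∑' k : ℤ, gs b d q a k * cexp (-Real.pi / AA b Y β * (k / q - β * d) ^ 2) := by
  have : NeZero q := ⟨hq.ne'⟩
  have hqC : (q : ℂ) ≠ 0 := by exact_mod_cast hq.ne'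
  have hA : 0 < (AA b Y β).re := AA_re_pos hb hY β
  have hA0 : AA b Y β ≠ 0 := fun h => by simp [h] at hA
  have hYC : (Y : ℂ) ≠ 0 := by exact_mod_cast hY.ne'
  have hAq : 0 < (AA b Y β * q ^ 2).re := by
    have : (AA b Y β * q ^ 2).re = (AA b Y β).re * (q:ℝ) ^ 2 := by
      rw [← ofReal_natCast, ← ofReal_pow, re_mul_ofReal]
    rw [this]; positivity
  have hS := th_summable d hb hY (a / q + β)
  unfold th
  rw [← ((Equiv.prodComm _ _).trans (Int.divModEquiv q).symm).tsum_eq]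
  have hS' := (((Equiv.prodComm _ _).trans (Int.divModEquiv q).symm).summable_iff).mpr hS
  simp only [Function.comp_def] at hS'
  rw [Summable.tsum_prod hS', tsum_fintype, ← tsum_mul_left]
  have key : ∀ s : Fin q, ∑' m : ℤ, cexp (-Real.pi * b / Y *
      ((((Equiv.prodComm _ _).trans (Int.divModEquiv q).symm) (s, m) : ℤ) : ℂ) ^ 2
      + 2 * Real.pi * I * (((a / q + β : ℝ) : ℂ) *
        (d * ((((Equiv.prodComm _ _).trans (Int.divModEquiv q).symm) (s, m) : ℤ) : ℂ) +
          b * ((((Equiv.prodComm _ _).trans (Int.divModEquiv q).symm) (s, m) : ℤ) : ℂ) ^ 2))) =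
      ∑' k : ℤ, 1 / (AA b Y β * q ^ 2) ^ (1 / 2 : ℂ) *
        (cexp (2 * Real.pi * I * ((a * (d * (s : ℕ) + b * (s : ℕ) ^ 2) + k * (s : ℕ)) / q)) *
         cexp (-Real.pi / AA b Y β * (k / q - β * d) ^ 2)) := by
    intro s
    have h1 : ∀ m : ℤ, cexp (-Real.pi * b / Y *
      ((((Equiv.prodComm _ _).trans (Int.divModEquiv q).symm) (s, m) : ℤ) : ℂ) ^ 2
      + 2 * Real.pi * I * (((a / q + β : ℝ) : ℂ) *
        (d * ((((Equiv.prodComm _ _).trans (Int.divModEquiv q).symm) (s, m) : ℤ) : ℂ) +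
          b * ((((Equiv.prodComm _ _).trans (Int.divModEquiv q).symm) (s, m) : ℤ) : ℂ) ^ 2))) =
        cexp (-Real.pi * AA b Y β * s ^ 2 + 2 * Real.pi * I * β * d * s
          + 2 * Real.pi * I * (a * (d * (s : ℕ) + b * (s : ℕ) ^ 2) / q)) *
        cexp (-Real.pi * (AA b Y β * q ^ 2) * m ^ 2
          + 2 * Real.pi * (-AA b Y β * q * s + I * β * d * q) * m) := by
      intro m
      rw [← Complex.exp_add]
      have := exp_int ((-Real.pi * b / Y * (m * q + (s:ℕ)) ^ 2
        + 2 * Real.pi * I * (β * (d * (m * q + (s:ℕ)) + b * (m * q + (s:ℕ)) ^ 2))) / (2 * Real.pi * I) +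
        (a * (d * (s : ℕ) + b * (s : ℕ) ^ 2) / q)) (a * (d * m + b * (m ^ 2 * q + 2 * m * s)))
      have e1 : (((((Equiv.prodComm _ _).trans (Int.divModEquiv q).symm) (s, m) : ℤ)) : ℂ)
        = m * q + (s : ℕ) := by
        simp [Int.divModEquiv]
      rw [e1]
      have hpi : (2 * Real.pi * I : ℂ) ≠ 0 := Complex.two_pi_I_ne_zero
      have hc : ∀ u v w : ℂ, 2 * Real.pi * I * (u / (2 * Real.pi * I) + v + w) =
          u + 2 * Real.pi * I * v + 2 * Real.pi * I * w := by
        intro u v w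
        rw [mul_add, mul_add, mul_div_cancel₀ _ hpi]
      refine Eq.trans ?_ (this.trans ?_)
      · congr 1
        push_cast
        rw [hc]
        field_simp
        ring
      · congr 1
        rw [mul_add, mul_div_cancel₀ _ hpi]
        simp only [AA]
        ring
    rw [tsum_congr h1, tsum_mul_left, Complex.tsum_exp_neg_quadratic hAq, ← mul_assoc,
      mul_comm (cexp _) (1 / _), mul_assoc, ← tsum_mul_left, ← tsum_mul_left]
    refine tsum_congr fun k => ?_
    congr 1
    rw [← Complex.exp_add, ← Complex.exp_add]
    congr 1
    field_simp
    ring_nf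
    simp only [I_sq, I_pow_three, I_pow_four]
    ring
  have hsum : ∀ s : Fin q, Summable fun k : ℤ => 1 / (AA b Y β * q ^ 2) ^ (1 / 2 : ℂ) *
        (cexp (2 * Real.pi * I * ((a * (d * (s : ℕ) + b * (s : ℕ) ^ 2) + k * (s : ℕ)) / q)) *
         cexp (-Real.pi / AA b Y β * (k / q - β * d) ^ 2)) := by
    intro s
    apply Summable.mul_left
    have hre : 0 < ((AA b Y β * q ^ 2)⁻¹).re := by
      rw [Complex.inv_re]
      have : AA b Y β * q ^ 2 ≠ 0 := by simp [hA0, hqC]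
      have := Complex.normSq_pos.mpr this
      positivity
    refine ((summable_quad hre (β * d / q / AA b Y β + I * s / q)).mul_left
      (cexp (2 * Real.pi * I * ((a * (d * (s : ℕ) + b * (s : ℕ) ^ 2)) / q) -
        Real.pi / AA b Y β * (β * d) ^ 2))).congr ?_
    intro k
    rw [← Complex.exp_add, ← Complex.exp_add]
    congr 1
    field_simp
    ring
  rw [Finset.sum_congr rfl fun s _ => key s, ← Summable.tsum_finsetSum fun s _ => hsum s]
  refine tsum_congr fun k => ?_
  rw [gs, Finset.sum_mul, Finset.mul_sum]

end CM

end

section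

namespace CM
open Complex Filter Topology MeasureTheory

theorem gs_eq (b d : ℤ) (q : ℕ) [NeZero q] (a k : ℤ) :
    gs b d q a k = ∑ s : ZMod q, ZMod.stdAddChar ((a * (d * s + b * s ^ 2) + k * s : ZMod q)) := by
  obtain ⟨n, rfl⟩ : ∃ n, q = n + 1 := ⟨q - 1, (Nat.succ_pred_eq_of_pos (NeZero.pos q)).symm⟩
  unfold gs
  refine Finset.sum_congr rfl fun s _ => ?_
  have h := ZMod.stdAddChar_coe (N := n + 1) (a * (d * (s : ℕ) + b * (s : ℕ) ^ 2) + k * (s : ℕ))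
  have e : (((s : ℕ) : ZMod (n + 1))) = (show ZMod (n+1) from s) := Fin.cast_val_eq_self s
  push_cast at h
  rw [e] at h
  refine Eq.trans ?_ h.symm
  congr 1
  push_cast
  ring

theorem gs_sq (b d : ℤ) (q : ℕ) [NeZero q] (a k : ℤ) (ha : IsCoprime a (q : ℤ)) :
    ‖gs b d q a k‖ ^ 2 ≤ q * (Finset.univ.filter fun v : ZMod q => (2 * b * v : ZMod q) = 0).card := by
  have hau : IsUnit (a : ZMod q) := by
    obtain ⟨u, v, h⟩ := ha
    have := congrArg (Int.cast : ℤ → ZMod q) h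
    push_cast at this
    simp at this
    exact IsUnit.of_mul_eq_one u (by rw [mul_comm]; exact this)
  set ψ := ZMod.stdAddChar (N := q)
  set P : ZMod q → ZMod q := fun s => a * (d * s + b * s ^ 2) + k * s
  have h1 : (‖gs b d q a k‖ ^ 2 : ℂ) = ∑ v : ZMod q, ψ (P v) * (if (2 * b * v : ZMod q) = 0 then (q : ℂ) else 0) := by
    rw [← Complex.ofReal_pow, ← Complex.normSq_eq_norm_sq, ← Complex.mul_conj, gs_eq, map_sum, Finset.sum_mul_sum,
      Finset.sum_comm]
    have : ∀ s' : ZMod q, ∑ s : ZMod q, ψ (P s) * (starRingEnd ℂ) (ψ (P s')) =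
        ∑ v : ZMod q, ψ (P v) * ψ (s' * (a * (2 * b * v))) := by
      intro s'
      rw [← Equiv.sum_comp (Equiv.addRight s')]
      refine Finset.sum_congr rfl fun v _ => ?_
      rw [← AddChar.map_neg_eq_conj, ← AddChar.map_add_eq_mul, ← AddChar.map_add_eq_mul]
      congr 1
      simp only [P, Equiv.coe_addRight]
      ring
    rw [Finset.sum_congr rfl fun s' _ => this s', Finset.sum_comm]
    refine Finset.sum_congr rfl fun v _ => ?_
    rw [← Finset.mul_sum, AddChar.sum_mulShift _ (ZMod.isPrimitive_stdAddChar q)]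
    simp only [ZMod.card, hau.mul_right_eq_zero]
    split_ifs <;> simp
  have h2 : ‖gs b d q a k‖ ^ 2 = ‖(‖gs b d q a k‖ ^ 2 : ℂ)‖ := by
    simp
  rw [h2, h1]
  refine (norm_sum_le _ _).trans ?_
  have : ∀ v ∈ (Finset.univ : Finset (ZMod q)), ‖ψ (P v) * (if (2 * b * v : ZMod q) = 0 then (q : ℂ) else 0)‖ ≤
      if (2 * b * v : ZMod q) = 0 then (q : ℝ) else 0 := by
    intro v _
    rw [norm_mul, AddChar.norm_apply, one_mul]
    split_ifs <;> simp
  refine (Finset.sum_le_sum this).trans ?_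
  rw [← Finset.sum_filter, Finset.sum_const, nsmul_eq_mul, mul_comm]

theorem gs_bound {b : ℤ} (hb : 0 < b) (d : ℤ) {q : ℕ} (hq : 0 < q) (a k : ℤ) (ha : IsCoprime a (q : ℤ)) :
    ‖gs b d q a k‖ ^ 2 ≤ q * (2 * b) := by
  have : NeZero q := ⟨hq.ne'⟩
  refine (gs_sq b d q a k ha).trans ?_
  gcongr
  have : (Finset.univ.filter fun v : ZMod q => (2 * b * v : ZMod q) = 0).card ≤ (Finset.range (2 * b).toNat).card := by
    refine Finset.card_le_card_of_injOn (fun v => (2 * b.toNat * v.val) / q) ?_ ?_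
    · intro v hv
      simp only [Finset.coe_range, Set.mem_Iio]
      rw [Nat.div_lt_iff_lt_mul hq]
      have h2 : (2 * b).toNat = 2 * b.toNat := by omega
      rw [h2]
      have := ZMod.val_lt v
      have hb' : 0 < b.toNat := by omega
      exact Nat.mul_lt_mul_of_pos_left this (by omega)
    · intro v hv w hw h
      have key : ∀ v : ZMod q, (2 * b * v : ZMod q) = 0 → q ∣ 2 * b.toNat * v.val := by
        intro v hv
        rw [← ZMod.natCast_eq_zero_iff]
        push_cast
        rw [ZMod.natCast_zmod_val]
        have : ((b.toNat : ℕ) : ZMod q) = (b : ZMod q) := by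
          rw [← Int.cast_natCast, Int.toNat_of_nonneg hb.le]
        rw [this, hv]
      simp only [Finset.coe_filter, Finset.mem_univ, true_and, Set.mem_ofPred_eq] at hv hw
      obtain ⟨x, hx⟩ := key v hv
      obtain ⟨y, hy⟩ := key w hw
      simp only [hx, hy, Nat.mul_div_cancel_left _ hq] at h
      rw [← h, ← hx] at hy
      have hb' : 0 < 2 * b.toNat := by omega
      exact (ZMod.val_injective q (Nat.eq_of_mul_eq_mul_left hb' hy)).symm
  rw [Finset.card_range] at this
  calc _ ≤ (((2 * b).toNat : ℕ) : ℝ) := by exact_mod_cast this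
    _ = (((2 * b).toNat : ℤ) : ℝ) := (Int.cast_natCast _).symm
    _ = _ := by rw [Int.toNat_of_nonneg (by omega)]; push_cast; ring

theorem gs_bound_coprime {b : ℤ} (d : ℤ) {q : ℕ} (hq : 0 < q) (a k : ℤ) (ha : IsCoprime a (q : ℤ))
    (hb : IsCoprime (2 * b) (q : ℤ)) :
    ‖gs b d q a k‖ ^ 2 ≤ q := by
  have : NeZero q := ⟨hq.ne'⟩
  refine (gs_sq b d q a k ha).trans ?_
  have hau : IsUnit (2 * b : ZMod q) := by
    obtain ⟨u, v, h⟩ := hb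
    have := congrArg (Int.cast : ℤ → ZMod q) h
    push_cast at this
    simp at this
    exact IsUnit.of_mul_eq_one u (by rw [mul_comm]; exact this)
  have : (Finset.univ.filter fun v : ZMod q => (2 * b * v : ZMod q) = 0) = {0} := by
    ext v
    simp [hau.mul_right_eq_zero]
  rw [this]; simp

theorem gs_zero {b : ℤ} {q p : ℕ} (hq : 0 < q) (hp : 1 < p) (hpq : p ∣ q) (hpb : (p : ℤ) ∣ b) (a : ℤ)
    (ha : IsCoprime a (q : ℤ)) : gs b 1 q a 0 = 0 := by
  have : NeZero q := ⟨hq.ne'⟩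
  obtain ⟨w, hw⟩ := hpq
  obtain ⟨e, he⟩ := hpb
  have hau : IsUnit (a : ZMod q) := by
    obtain ⟨u, v, h⟩ := ha
    have := congrArg (Int.cast : ℤ → ZMod q) h
    push_cast at this
    simp at this
    exact IsUnit.of_mul_eq_one u (by rw [mul_comm]; exact this)
  have hbw : (b * w : ZMod q) = 0 := by
    have : ((p * w : ℕ) : ZMod q) = 0 := by rw [← hw]; simp
    push_cast at this
    rw [he]; push_cast
    linear_combination (e : ZMod q) * this
  have hw0 : (w : ZMod q) ≠ 0 := by
    intro h
    rw [ZMod.natCast_eq_zero_iff] at h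
    have hwpos : 0 < w := by
      rcases Nat.eq_zero_or_pos w with h | h
      · simp [h] at hw; omega
      · exact h
    have := Nat.le_of_dvd hwpos h
    nlinarith
  have h1 : gs b 1 q a 0 = ZMod.stdAddChar (a * w : ZMod q) * gs b 1 q a 0 := by
    rw [gs_eq]
    conv_lhs => rw [← Equiv.sum_comp (Equiv.addRight (w : ZMod q))]
    rw [Finset.mul_sum]
    refine Finset.sum_congr rfl fun s _ => ?_
    rw [← AddChar.map_add_eq_mul]
    congr 1
    simp only [Equiv.coe_addRight]
    push_cast
    linear_combination (a * (2 * s + w) : ZMod q) * hbw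
  have h2 : ZMod.stdAddChar (a * w : ZMod q) ≠ 1 := by
    rw [← AddChar.map_zero_eq_one (ZMod.stdAddChar (N := q))]
    intro h
    have := ZMod.injective_stdAddChar h
    rw [hau.mul_right_eq_zero] at this
    exact hw0 this
  have h3 : (1 - ZMod.stdAddChar (a * w : ZMod q)) * gs b 1 q a 0 = 0 := by
    linear_combination h1
  rcases mul_eq_zero.mp h3 with h | h
  · exact absurd (sub_eq_zero.mp h).symm h2
  · exact h

end CM

end

section

namespace CM
open Complex Filter Topology MeasureTheory

theorem AA_scale (b : ℤ) {Y : ℝ} (_ : 0 < Y) (γ : ℝ) :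
    AA b Y (γ / Y) = ((1 / Y : ℝ) : ℂ) * (b * (1 - 2 * I * γ)) := by
  simp only [AA]
  push_cast
  ring

theorem inv_re_aux {b : ℤ} (hb : 0 < b) {Y : ℝ} (hY : 0 < Y) (γ : ℝ) :
    ((AA b Y (γ / Y))⁻¹).re = Y / (b * (1 + 4 * γ ^ 2)) := by
  have hb' : (0:ℝ) < b := by exact_mod_cast hb
  have h : AA b Y (γ / Y) = ((b / Y : ℝ) : ℂ) * ⟨1, -2 * γ⟩ := by
    rw [AA_scale b hY]
    apply Complex.ext <;> simp <;> ring
  rw [h, mul_inv, ← ofReal_inv, re_ofReal_mul, Complex.inv_re, Complex.normSq_mk]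
  have : 0 < 1 + 4 * γ ^ 2 := by positivity
  have : 1 * 1 + (-2 * γ) * (-2 * γ) ≠ 0 := by nlinarith
  field_simp
  ring

theorem norm_term {b : ℤ} (hb : 0 < b) (d : ℤ) {Y : ℝ} (hY : 0 < Y) (γ : ℝ) (q : ℕ) (k : ℤ) :
    ‖cexp (-Real.pi / AA b Y (γ / Y) * (k / q - ((γ / Y : ℝ) : ℂ) * d) ^ 2)‖ =
      Real.exp (-Real.pi * (Y / (b * (1 + 4 * γ ^ 2))) * (k / q - γ / Y * d) ^ 2) := by
  rw [Complex.norm_exp]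
  congr 1
  have : (-Real.pi / AA b Y (γ / Y) * (k / q - ((γ / Y : ℝ) : ℂ) * d) ^ 2 : ℂ) =
      ((-Real.pi * (k / q - γ / Y * d) ^ 2 : ℝ) : ℂ) * (AA b Y (γ / Y))⁻¹ := by
    push_cast
    ring
  rw [this, re_ofReal_mul, inv_re_aux hb hY]
  ring

theorem summable_gauss {c : ℝ} (hc : 0 < c) (e : ℝ) :
    Summable fun k : ℤ => Real.exp (-c * (k:ℝ) ^ 2 + e) := by
  have h := (summable_quad (a := ((c / Real.pi : ℝ) : ℂ))
    (by rw [ofReal_re]; positivity) 0).norm.mul_left (Real.exp e)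
  refine h.congr fun k => ?_
  rw [Complex.norm_exp, ← Real.exp_add]
  congr 1
  have : (-Real.pi * ((c / Real.pi : ℝ) : ℂ) * (k : ℂ) ^ 2 + 2 * Real.pi * 0 * k) =
    ((-c * (k:ℝ) ^ 2 : ℝ) : ℂ) := by
    push_cast
    have := Real.pi_ne_zero
    have : (Real.pi : ℂ) ≠ 0 := by exact_mod_cast this
    field_simp
    ring
  rw [this, ofReal_re]
  ring

theorem norm_factor {b : ℤ} (hb : 0 < b) {Y : ℝ} (hY : 0 < Y) (γ : ℝ) {q : ℕ} (hq : 0 < q) :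
    ‖1 / (AA b Y (γ / Y) * q ^ 2) ^ (1 / 2 : ℂ)‖ =
      √Y / (q * √b * (1 + 4 * γ ^ 2) ^ (1 / 4 : ℝ)) := by
  have hb' : (0:ℝ) < b := by exact_mod_cast hb
  have h0 : ‖(1 - 2 * I * γ : ℂ)‖ = √(1 + 4 * γ ^ 2) := by
    have : (1 - 2 * I * γ : ℂ) = ⟨1, -2 * γ⟩ := by
      apply Complex.ext <;> simp
    rw [this, Complex.norm_def, Complex.normSq_mk]
    congr 1; ring
  have h1 : ‖AA b Y (γ / Y) * q ^ 2‖ = (1 / Y) * (b * √(1 + 4 * γ ^ 2)) * q ^ 2 := by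
    rw [AA_scale b hY, norm_mul, norm_mul, norm_mul, h0, norm_pow, Complex.norm_natCast, Complex.norm_intCast,
      Complex.norm_real, Real.norm_of_nonneg (by positivity), abs_of_pos hb']
  rw [norm_div, norm_one, show (1 / 2 : ℂ) = ((1 / 2 : ℝ) : ℂ) by push_cast; rfl, Complex.norm_cpow_real, h1,
    ← Real.sqrt_eq_rpow, Real.sqrt_mul (by positivity), Real.sqrt_mul (by positivity), Real.sqrt_mul (by positivity),
    Real.sqrt_sq (by positivity), Real.sqrt_div (by positivity), Real.sqrt_one]
  have : √√(1 + 4 * γ ^ 2) = (1 + 4 * γ ^ 2) ^ (1 / 4 : ℝ) := by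
    rw [Real.sqrt_eq_rpow, Real.sqrt_eq_rpow, ← Real.rpow_mul (by positivity)]
    norm_num
  rw [this]
  have : 0 < (1 + 4 * γ ^ 2) ^ (1 / 4 : ℝ) := by positivity
  have : 0 < √Y := Real.sqrt_pos.mpr hY
  have : 0 < √(b:ℝ) := Real.sqrt_pos.mpr hb'
  have : (0:ℝ) < q := by exact_mod_cast hq
  field_simp

theorem th_upper {b : ℤ} (hb : 0 < b) (d : ℤ) (hd : d ^ 2 ≤ 1) :
    ∃ C : ℝ, 0 < C ∧ ∀ (Y : ℝ) (q : ℕ) (a : ℤ) (γ : ℝ), 1 ≤ Y → 0 < q → (q:ℝ) ^ 2 ≤ Y →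
      IsCoprime a (q : ℤ) → (q:ℝ) ^ 2 * γ ^ 2 ≤ Y →
      ‖th b d Y (a / q + γ / Y)‖ ≤ C * (√Y * ((q:ℝ) ^ (-(1/2) : ℝ) * (1 + 4 * γ ^ 2) ^ (-(1 / 4) : ℝ))) := by
  have hb' : (0:ℝ) < b := by exact_mod_cast hb
  have hpi := Real.pi_pos
  have hc : 0 < Real.pi / (10 * b) := by positivity
  set S := ∑' k : ℤ, Real.exp (-(Real.pi / (10 * b)) * (k:ℝ) ^ 2 + Real.pi / (5 * b)) with hSdef
  have hsum := summable_gauss hc (Real.pi / (5 * b))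
  have hS : 0 < S := hsum.tsum_pos (fun k => (Real.exp_pos _).le) 0 (Real.exp_pos _)
  refine ⟨√2 * S, by positivity, ?_⟩
  intro Y q a γ hY hq hqY ha hγ
  have hY0 : 0 < Y := by linarith
  have hq' : (0:ℝ) < q := by exact_mod_cast hq
  rw [th_rat d hb hY0 q hq a (γ / Y), norm_mul, norm_factor hb hY0 γ hq]
  have hgs : ∀ k, ‖gs b d q a k‖ ≤ √q * √(2 * b) := by
    intro k
    rw [← Real.sqrt_mul (by positivity)]
    exact Real.le_sqrt_of_sq_le (gs_bound hb d hq a k ha)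
  have hterm : ∀ k : ℤ, ‖gs b d q a k * cexp (-Real.pi / AA b Y (γ / Y) * (k / q - ((γ / Y : ℝ) : ℂ) * d) ^ 2)‖ ≤
      (√q * √(2 * b)) * Real.exp (-(Real.pi / (10 * b)) * (k:ℝ) ^ 2 + Real.pi / (5 * b)) := by
    intro k
    rw [norm_mul, norm_term hb d hY0]
    gcongr ?_ * Real.exp ?_
    · exact hgs k
    · set η : ℝ := q * γ * d / Y with hη
      have hη2 : η ^ 2 ≤ 1 := by
        rw [hη, div_pow, div_le_one (by positivity)]
        have hd' : (d:ℝ) ^ 2 ≤ 1 := by exact_mod_cast hd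
        calc (q * γ * d : ℝ) ^ 2 = (q^2 * γ^2) * d ^ 2 := by ring
          _ ≤ Y * 1 := by gcongr
          _ ≤ Y ^ 2 := by nlinarith
      have e1 : ((k:ℝ) / q - γ / Y * d) ^ 2 = (k - η) ^ 2 / q ^ 2 := by
        rw [hη]; field_simp
      have h2 : (k:ℝ) ^ 2 / 2 - 1 ≤ (k - η) ^ 2 := by nlinarith [sq_nonneg ((k:ℝ) - 2 * η)]
      have h3 : 1 / 5 ≤ Y / ((1 + 4 * γ ^ 2) * q ^ 2) := by
        rw [div_le_div_iff₀ (by norm_num) (by positivity)]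
        nlinarith
      rw [e1]
      have e2 : -Real.pi * (Y / (b * (1 + 4 * γ ^ 2))) * ((k - η) ^ 2 / q ^ 2) =
        -(Real.pi / b) * (Y / ((1 + 4 * γ ^ 2) * q ^ 2) * (k - η) ^ 2) := by
        field_simp
      rw [e2]
      have h4 : 1 / 5 * ((k:ℝ) ^ 2 / 2 - 1) ≤ Y / ((1 + 4 * γ ^ 2) * q ^ 2) * (k - η) ^ 2 := by
        calc 1 / 5 * ((k:ℝ) ^ 2 / 2 - 1) ≤ 1 / 5 * (k - η) ^ 2 := by gcongr
          _ ≤ _ := by gcongr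
      have h5 : 0 < Real.pi / b := by positivity
      have e3 : -(Real.pi / (10 * b)) * (k:ℝ) ^ 2 + Real.pi / (5 * b) =
          -(Real.pi / b) * (1 / 5 * ((k:ℝ) ^ 2 / 2 - 1)) := by
        field_simp; ring
      rw [e3]
      nlinarith
  have hT : ‖∑' k : ℤ, gs b d q a k * cexp (-Real.pi / AA b Y (γ / Y) * (k / q - ((γ / Y : ℝ) : ℂ) * d) ^ 2)‖ ≤
      (√q * √(2 * b)) * S := by
    rw [hSdef, ← tsum_mul_left]
    exact tsum_of_norm_bounded (hsum.mul_left _).hasSum hterm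
  have h2b : √(2 * (b:ℝ)) = √2 * √b := Real.sqrt_mul (by norm_num) _
  have hsb : 0 < √(b:ℝ) := Real.sqrt_pos.mpr hb'
  have hsq : 0 < √(q:ℝ) := Real.sqrt_pos.mpr hq'
  have hg : 0 < (1 + 4 * γ ^ 2) ^ (1 / 4 : ℝ) := by positivity
  calc _ ≤ √Y / (q * √b * (1 + 4 * γ ^ 2) ^ (1 / 4 : ℝ)) * ((√q * √(2 * b)) * S) := by gcongr
    _ = _ := by
      rw [h2b, Real.rpow_neg (by positivity), Real.rpow_neg (by positivity), ← Real.sqrt_eq_rpow]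
      nth_rewrite 1 [← Real.sq_sqrt hq'.le]
      field_simp

theorem cpow_scale {x : ℝ} (hx : 0 < x) {z : ℂ} (hz : z ≠ 0) (s : ℂ) :
    ((x : ℂ) * z) ^ s = (x : ℂ) ^ s * z ^ s := by
  have hx' : (x : ℂ) ≠ 0 := by exact_mod_cast hx.ne'
  rw [cpow_def_of_ne_zero (mul_ne_zero hx' hz), cpow_def_of_ne_zero hx', cpow_def_of_ne_zero hz,
    Complex.log_ofReal_mul hx hz, ← Complex.exp_add, Complex.ofReal_log hx.le]
  ring_nf

theorem one_sub_ne (γ : ℝ) : (1 - 2 * I * γ : ℂ) ≠ 0 := by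
  intro h
  have := congrArg Complex.re h
  simp at this

theorem tendsto_const_mul_one_div (c : ℂ) :
    Tendsto (fun n : ℕ => c * (1 / (n : ℂ))) atTop (𝓝 0) := by
  have h1 : Tendsto (fun n : ℕ => ((1 / (n : ℝ) : ℝ) : ℂ)) atTop (𝓝 ((0 : ℝ) : ℂ)) :=
    (Complex.continuous_ofReal.tendsto _).comp (tendsto_const_div_atTop_nhds_zero_nat (1 : ℝ))
  have h := h1.const_mul c
  rw [Complex.ofReal_zero, mul_zero] at h
  refine h.congr fun n => ?_
  push_cast
  rfl

theorem th_lim_zero {b : ℤ} (hb : 0 < b) (d : ℤ) (q : ℕ) (γ : ℝ) :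
    Tendsto (fun n : ℕ => cexp (-Real.pi / AA b n (γ / n) *
      (((0 : ℤ) : ℂ) / q - ((γ / n : ℝ) : ℂ) * d) ^ 2)) atTop (𝓝 1) := by
  have h1 : Tendsto (fun n : ℕ => (-Real.pi * (γ * d) ^ 2 / (b * (1 - 2 * I * γ)) : ℂ) * (1 / (n : ℂ)))
      atTop (𝓝 0) := by
    exact tendsto_const_mul_one_div _
  have h2 := (Complex.continuous_exp.tendsto _).comp h1
  rw [Complex.exp_zero] at h2
  refine h2.congr' ?_
  filter_upwards [eventually_gt_atTop 0] with n hn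
  have hn' : (0:ℝ) < n := by exact_mod_cast hn
  have hnC : (n:ℂ) ≠ 0 := by exact_mod_cast hn.ne'
  rw [AA_scale b hn']
  have hz := one_sub_ne γ
  have hbC : (b : ℂ) ≠ 0 := by exact_mod_cast hb.ne'
  simp only [Function.comp_apply]
  congr 1
  push_cast
  field_simp
  ring

theorem th_lim {b : ℤ} (hb : 0 < b) (d : ℤ) {q : ℕ} (hq : 0 < q) (a : ℤ) (ha : IsCoprime a (q : ℤ)) (γ : ℝ) :
    Tendsto (fun n : ℕ => th b d n (a / q + γ / n) / (√n : ℝ)) atTop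
      (𝓝 (gs b d q a 0 / (b * (1 - 2 * I * γ) * q ^ 2) ^ (1 / 2 : ℂ))) := by
  have hb' : (0:ℝ) < b := by exact_mod_cast hb
  have hpi := Real.pi_pos
  have hq' : (0:ℝ) < q := by exact_mod_cast hq
  set κ : ℝ := 1 / (b * (1 + 4 * γ ^ 2)) with hκ
  have hkap : 0 < κ := by positivity
  have hkey : Tendsto (fun n : ℕ => ∑' k : ℤ, gs b d q a k *
      cexp (-Real.pi / AA b n (γ / n) * (k / q - ((γ / n : ℝ) : ℂ) * d) ^ 2)) atTop
      (𝓝 (∑' k : ℤ, if k = 0 then gs b d q a 0 else 0)) := by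
    refine tendsto_tsum_of_dominated_convergence (bound := fun k : ℤ => (√q * √(2 * b)) *
      Real.exp (-(Real.pi * κ / (2 * q ^ 2)) * (k:ℝ) ^ 2 + Real.pi * κ * (γ * d) ^ 2))
      ((summable_gauss (by positivity) _).mul_left _) ?_ ?_
    · intro k
      split_ifs with hk
      · subst hk
        have h := (th_lim_zero hb d q γ).const_mul (gs b d q a 0)
        rw [mul_one] at h
        exact h
      · rw [tendsto_zero_iff_norm_tendsto_zero]
        have h1 : Tendsto (fun n : ℕ => Real.pi * κ * ((k:ℝ) / q - γ / n * d) ^ 2 * n) atTop atTop := by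
          refine Tendsto.pos_mul_atTop (C := Real.pi * κ * ((k:ℝ) / q - 0 * d) ^ 2) ?_ ?_ tendsto_natCast_atTop_atTop
          · have : (k:ℝ) ≠ 0 := by exact_mod_cast hk
            have : (k:ℝ) / q - 0 * d ≠ 0 := by
              rw [zero_mul, sub_zero]; positivity
            positivity
          · refine Tendsto.const_mul _ (Tendsto.pow (Tendsto.sub tendsto_const_nhds (Tendsto.mul_const _ ?_)) 2)
            exact tendsto_const_div_atTop_nhds_zero_nat γ
        have h2 := (Real.tendsto_exp_neg_atTop_nhds_zero.comp h1).const_mul ‖gs b d q a k‖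
        rw [mul_zero] at h2
        refine h2.congr' ?_
        filter_upwards [eventually_gt_atTop 0] with n hn
        have hn' : (0:ℝ) < n := by exact_mod_cast hn
        rw [norm_mul, norm_term hb d hn']
        simp only [Function.comp_apply, hκ]
        congr 2
        field_simp
    · filter_upwards [eventually_gt_atTop 0] with n hn k
      have hn' : (0:ℝ) < n := by exact_mod_cast hn
      have hn1 : (1:ℝ) ≤ n := by exact_mod_cast hn
      rw [norm_mul, norm_term hb d hn']
      gcongr ?_ * Real.exp ?_
      · rw [← Real.sqrt_mul (by positivity)]
        exact Real.le_sqrt_of_sq_le (gs_bound hb d hq a k ha)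
      · have e1 : -Real.pi * (n / (b * (1 + 4 * γ ^ 2))) * ((k:ℝ) / q - γ / n * d) ^ 2 =
          -(Real.pi * κ) * (n * ((k:ℝ) / q - γ / n * d) ^ 2) := by
          rw [hκ]; field_simp
        have h1 : (k:ℝ) ^ 2 / (2 * q ^ 2) - (γ * d) ^ 2 ≤ ((k:ℝ) / q - γ / n * d) ^ 2 := by
          have : (γ / n * d) ^ 2 ≤ (γ * d) ^ 2 := by
            have e : γ / n * d = γ * d / n := by ring
            rw [e, div_pow]
            exact div_le_self (by positivity) (by nlinarith)
          have e : (k:ℝ) ^ 2 / (2 * q ^ 2) = (k / q) ^ 2 / 2 := by field_simp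
          rw [e]
          nlinarith [sq_nonneg ((k:ℝ) / q - 2 * (γ / n * d))]
        have h2 : (k:ℝ) ^ 2 / (2 * q ^ 2) - (γ * d) ^ 2 ≤ n * ((k:ℝ) / q - γ / n * d) ^ 2 := by
          refine h1.trans ?_
          nlinarith [sq_nonneg ((k:ℝ) / q - γ / n * d)]
        have e2 : -(Real.pi * κ / (2 * q ^ 2)) * (k:ℝ) ^ 2 + Real.pi * κ * (γ * d) ^ 2 =
          -(Real.pi * κ) * ((k:ℝ) ^ 2 / (2 * q ^ 2) - (γ * d) ^ 2) := by ring
        rw [e1, e2]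
        have : 0 < Real.pi * κ := by positivity
        nlinarith
  rw [tsum_ite_eq] at hkey
  have h3 := hkey.const_mul (1 / (b * (1 - 2 * I * γ) * q ^ 2 : ℂ) ^ (1 / 2 : ℂ))
  rw [one_div_mul_eq_div] at h3
  refine h3.congr' ?_
  filter_upwards [eventually_gt_atTop 0] with n hn
  have hn' : (0:ℝ) < n := by exact_mod_cast hn
  have e := th_rat d hb hn' q hq a (γ / n)
  have hz := one_sub_ne γ
  have hbC : (b : ℂ) ≠ 0 := by exact_mod_cast hb.ne'
  have hqC : (q : ℂ) ≠ 0 := by exact_mod_cast hq.ne'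
  have hz2 : (b * (1 - 2 * I * γ) * q ^ 2 : ℂ) ≠ 0 := by positivity
  have e2 : AA b n (γ / n) * q ^ 2 = ((1 / n : ℝ) : ℂ) * (b * (1 - 2 * I * γ) * q ^ 2) := by
    rw [AA_scale b hn']; ring
  have e3 : (((1 / n : ℝ) : ℂ)) ^ (1 / 2 : ℂ) = ((1 / √n : ℝ) : ℂ) := by
    rw [show (1 / 2 : ℂ) = ((1 / 2 : ℝ) : ℂ) by push_cast; rfl, ← Complex.ofReal_cpow (by positivity),
      ← Real.sqrt_eq_rpow, Real.sqrt_div (by positivity), Real.sqrt_one]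
  have hsn : ((√(n:ℝ) : ℝ) : ℂ) ≠ 0 := by
    exact_mod_cast (Real.sqrt_pos.mpr hn').ne'
  rw [e, e2, cpow_scale (by positivity) hz2, e3]
  push_cast
  field_simp

end CM

end

section
open Complex Filter Topology MeasureTheory
namespace CM

noncomputable def phK (s γ t : ℝ) : ℂ :=
  ((t ^ (s - 1) * Real.exp (-Real.pi * t) : ℝ) : ℂ) * cexp (2 * Real.pi * I * γ * t)

noncomputable def phi (s γ : ℝ) : ℂ := ∫ t in Set.Ioi (0:ℝ), phK s γ t

theorem gam_int {s : ℝ} (hs : 0 < s) :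
    IntegrableOn (fun t : ℝ => t ^ (s - 1) * Real.exp (-Real.pi * t)) (Set.Ioi 0) := by
  have := integrableOn_rpow_mul_exp_neg_mul_rpow (p := 1) (s := s - 1) (b := Real.pi)
    (by linarith) one_pos Real.pi_pos
  simpa using this

theorem norm_e (γ t : ℝ) : ‖cexp (2 * Real.pi * I * γ * t)‖ = 1 := by
  have : (2 * Real.pi * I * γ * t : ℂ) = ((2 * Real.pi * γ * t : ℝ) : ℂ) * I := by
    push_cast; ring
  rw [this, Complex.norm_exp_ofReal_mul_I]

theorem phK_norm (s γ : ℝ) {t : ℝ} (ht : 0 < t) :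
    ‖phK s γ t‖ = t ^ (s - 1) * Real.exp (-Real.pi * t) := by
  rw [phK, norm_mul, norm_e, mul_one, Complex.norm_real, Real.norm_of_nonneg (by positivity)]

theorem phK_meas (s γ : ℝ) : Measurable (phK s γ) := by
  unfold phK
  fun_prop

theorem phK_int {s : ℝ} (hs : 0 < s) (γ : ℝ) : IntegrableOn (phK s γ) (Set.Ioi 0) := by
  refine (gam_int hs).mono' (phK_meas s γ).aestronglyMeasurable ?_
  filter_upwards [ae_restrict_mem measurableSet_Ioi] with t ht
  exact (phK_norm s γ ht).le

theorem phK_succ (s γ : ℝ) {t : ℝ} (ht : 0 < t) : phK (s + 1) γ t = t * phK s γ t := by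
  unfold phK
  rw [show s + 1 - 1 = (s - 1) + 1 by ring, Real.rpow_add_one ht.ne']
  push_cast
  ring

theorem phi_deriv {s : ℝ} (hs : 0 < s) (γ : ℝ) :
    HasDerivAt (phi s) (2 * Real.pi * I * phi (s + 1) γ) γ := by
  have h := hasDerivAt_integral_of_dominated_loc_of_deriv_le (𝕜 := ℝ)
    (μ := volume.restrict (Set.Ioi (0:ℝ))) (F := fun γ t => phK s γ t)
    (F' := fun γ t => 2 * Real.pi * I * phK (s + 1) γ t) (x₀ := γ) (s := Set.univ)
    (bound := fun t => 2 * Real.pi * (t ^ (s + 1 - 1) * Real.exp (-Real.pi * t)))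
    Filter.univ_mem (Eventually.of_forall fun γ => (phK_meas s γ).aestronglyMeasurable)
    (phK_int hs γ) ((phK_meas (s + 1) γ).const_mul _).aestronglyMeasurable
    (by
      filter_upwards [ae_restrict_mem measurableSet_Ioi] with t ht x _
      rw [norm_mul, phK_norm _ _ ht]
      have : ‖(2 * Real.pi * I : ℂ)‖ = 2 * Real.pi := by
        simp [abs_of_pos Real.pi_pos]
      rw [this])
    ((gam_int (by linarith)).const_mul _)
    (by
      filter_upwards [ae_restrict_mem measurableSet_Ioi] with t ht x _
      rw [phK_succ s x ht]
      unfold phK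
      have h1 : HasDerivAt (fun x : ℝ => (2 * Real.pi * I * x * t : ℂ)) (2 * Real.pi * I * t) x := by
        have := (((hasDerivAt_id x).ofReal_comp).const_mul (2 * Real.pi * I : ℂ)).mul_const (t : ℂ)
        simpa using this
      have h2 := (h1.cexp).const_mul (((t ^ (s - 1) * Real.exp (-Real.pi * t) : ℝ) : ℂ))
      refine h2.congr_deriv ?_
      ring)
  refine h.2.congr_deriv ?_
  rw [integral_const_mul]
  rfl

theorem phi_rec {s : ℝ} (hs : 0 < s) (γ : ℝ) :
    Real.pi * (1 - 2 * I * γ) * phi (s + 1) γ = s * phi s γ := by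
  have h := integral_Ioi_of_hasDerivAt_of_tendsto (a := (0:ℝ)) (m := (0:ℂ))
    (f := fun t : ℝ => phK (s + 1) γ t)
    (f' := fun t : ℝ => s * phK s γ t - Real.pi * (1 - 2 * I * γ) * phK (s + 1) γ t) ?_ ?_ ?_ ?_
  · rw [integral_sub ((phK_int hs γ).const_mul _) ((phK_int (by linarith) γ).const_mul _),
      integral_const_mul, integral_const_mul] at h
    have h0 : phK (s + 1) γ 0 = 0 := by
      simp [phK, Real.zero_rpow hs.ne']
    rw [h0, sub_zero] at h
    exact (sub_eq_zero.mp h).symm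
  · apply Continuous.continuousWithinAt
    unfold phK
    rw [show s + 1 - 1 = s by ring]
    have : Continuous fun t : ℝ => t ^ s := Real.continuous_rpow_const hs.le
    fun_prop
  · intro t ht
    have ht : 0 < t := ht
    have h1 : HasDerivAt (fun t : ℝ => t ^ s * Real.exp (-Real.pi * t))
        (s * t ^ (s - 1) * Real.exp (-Real.pi * t) + t ^ s * (Real.exp (-Real.pi * t) * (-Real.pi))) t := by
      refine HasDerivAt.mul (Real.hasDerivAt_rpow_const (Or.inl ht.ne')) ?_
      have := ((hasDerivAt_id t).const_mul (-Real.pi)).exp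
      simpa using this
    have h2 : HasDerivAt (fun t : ℝ => cexp (2 * Real.pi * I * γ * t))
        (cexp (2 * Real.pi * I * γ * t) * (2 * Real.pi * I * γ)) t := by
      have := (((hasDerivAt_id t).ofReal_comp).const_mul (2 * Real.pi * I * γ : ℂ)).cexp
      simpa using this
    have h3 := h1.ofReal_comp.mul h2
    have e : (fun t : ℝ => phK (s + 1) γ t) = fun t : ℝ =>
        ((t ^ s * Real.exp (-Real.pi * t) : ℝ) : ℂ) * cexp (2 * Real.pi * I * γ * t) := by
      funext t
      rw [phK, show s + 1 - 1 = s by ring]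
    rw [e]
    refine h3.congr_deriv ?_
    rw [phK_succ s γ ht]
    unfold phK
    have e2 : t ^ s = t ^ (s - 1) * t := by
      rw [← Real.rpow_add_one ht.ne', sub_add_cancel]
    rw [e2]
    push_cast
    ring
  · exact ((phK_int hs γ).const_mul _).sub ((phK_int (by linarith) γ).const_mul _)
  · rw [tendsto_zero_iff_norm_tendsto_zero]
    refine (tendsto_rpow_mul_exp_neg_mul_atTop_nhds_zero s Real.pi Real.pi_pos).congr' ?_
    filter_upwards [eventually_gt_atTop 0] with t ht
    rw [phK_norm _ _ ht, add_sub_cancel_right]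

theorem slit (γ : ℝ) : (1 - 2 * I * γ : ℂ) ∈ slitPlane := by
  left; simp

theorem phi_zero {s : ℝ} (hs : 0 < s) : phi s 0 = ((Real.pi ^ (-s) * Real.Gamma s : ℝ) : ℂ) := by
  have h := Real.integral_rpow_mul_exp_neg_mul_Ioi hs Real.pi_pos
  rw [one_div, Real.inv_rpow Real.pi_pos.le, ← Real.rpow_neg Real.pi_pos.le] at h
  rw [← h, phi]
  refine Eq.trans ?_ (integral_ofReal (𝕜 := ℂ))
  refine setIntegral_congr_fun measurableSet_Ioi fun t ht => ?_
  simp [phK]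

theorem phi_val {s : ℝ} (hs : 0 < s) (γ : ℝ) :
    phi s γ = ((Real.pi ^ (-s) * Real.Gamma s : ℝ) : ℂ) * (1 - 2 * I * γ) ^ (-(s:ℂ)) := by
  have hd : ∀ γ : ℝ, HasDerivAt (fun γ : ℝ => phi s γ * (1 - 2 * I * γ : ℂ) ^ (s : ℂ)) 0 γ := by
    intro γ
    have h1 : HasDerivAt (fun z : ℂ => (1 - 2 * I * z : ℂ)) (-(2 * I)) (γ : ℂ) := by
      have := ((hasDerivAt_id (γ:ℂ)).const_mul (2 * I)).const_sub 1
      simpa using this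
    have h2 := (h1.cpow_const (c := (s : ℂ)) (slit γ)).comp_ofReal
    refine ((phi_deriv hs γ).mul h2).congr_deriv ?_
    have h3 := phi_rec hs γ
    have hz := one_sub_ne γ
    have e : (1 - 2 * I * γ : ℂ) ^ (s:ℂ) = (1 - 2 * I * γ) ^ ((s:ℂ) - 1) * (1 - 2 * I * γ) := by
      rw [cpow_sub _ _ hz, cpow_one, div_mul_cancel₀ _ hz]
    rw [e]
    linear_combination (2 * I * (1 - 2 * I * γ) ^ ((s:ℂ) - 1)) * h3
  have hc := is_const_of_deriv_eq_zero (fun γ => (hd γ).differentiableAt) (fun γ => (hd γ).deriv) γ 0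
  simp only [ofReal_zero, mul_zero, sub_zero, one_cpow, mul_one] at hc
  rw [phi_zero hs] at hc
  have hz := one_sub_ne γ
  rw [← hc, mul_assoc, ← cpow_add _ _ hz, add_neg_cancel, cpow_zero, mul_one]

theorem one_sub_norm (γ : ℝ) : ‖(1 - 2 * I * γ : ℂ)‖ = (1 + 4 * γ ^ 2) ^ (1 / 2 : ℝ) := by
  rw [Complex.norm_def, Complex.normSq_apply, Real.sqrt_eq_rpow]
  congr 1
  simp
  ring

theorem one_sub_cpow_norm (γ s : ℝ) : ‖(1 - 2 * I * γ : ℂ) ^ (s:ℂ)‖ = (1 + 4 * γ ^ 2) ^ (s / 2) := by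
  rw [norm_cpow_of_ne_zero (one_sub_ne γ), one_sub_norm, ← Real.rpow_mul (by positivity)]
  simp
  congr 1
  ring

theorem bracket_int {s : ℝ} (hs : 1 < s) : Integrable (fun γ : ℝ => (1 + 4 * γ ^ 2) ^ (-s / 2)) := by
  have h := integrable_rpow_neg_one_add_norm_sq (E := ℝ) (μ := volume) (r := s) (by simpa using hs)
  have := h.comp_mul_left' (R := 2) (by norm_num)
  refine this.congr (Eventually.of_forall fun γ => ?_)
  simp only [Real.norm_eq_abs, sq_abs]
  ring_nf

theorem cpow_neg_int {s : ℝ} (hs : 1 < s) : Integrable (fun γ : ℝ => (1 - 2 * I * γ : ℂ) ^ (-(s:ℂ))) := by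
  refine (bracket_int hs).mono' ?_ ?_
  · apply Continuous.aestronglyMeasurable
    rw [continuous_iff_continuousAt]
    intro γ
    exact ContinuousAt.cpow (by fun_prop) (by fun_prop) (slit γ)
  · refine Eventually.of_forall fun γ => ?_
    rw [← ofReal_neg, one_sub_cpow_norm]

theorem J_int {s : ℝ} (hs : 1 < s) : ∃ J : ℝ, 0 < J ∧
    ∫ γ : ℝ, (1 - 2 * I * γ : ℂ) ^ (-(s:ℂ)) * cexp (-(2 * Real.pi * I * γ)) = J := by
  have hs0 : 0 < s := by linarith
  set c : ℝ := Real.pi ^ (-s) * Real.Gamma s with hc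
  have hc0 : 0 < c := by
    have := Real.Gamma_pos_of_pos hs0
    have := Real.pi_pos
    positivity
  refine ⟨Real.exp (-Real.pi) / c, by positivity, ?_⟩
  set f : ℝ → ℂ := fun t => ((max t 0 ^ (s - 1) * Real.exp (-Real.pi * t) : ℝ) : ℂ) with hf
  have hfc : Continuous f := by
    have h1 : Continuous fun t : ℝ => max t 0 ^ (s - 1) :=
      (Real.continuous_rpow_const (by linarith)).comp (by fun_prop)
    fun_prop
  have hfz : ∀ t, t ≤ 0 → f t = 0 := by
    intro t ht
    simp only [hf, max_eq_right ht, Real.zero_rpow (by linarith : s - 1 ≠ 0)]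
    simp
  have hind : ∀ g : ℝ → ℂ, (fun t => g t * f t) = Set.indicator (Set.Ioi 0)
      (fun t => g t * ((t ^ (s - 1) * Real.exp (-Real.pi * t) : ℝ) : ℂ)) := by
    intro g
    funext t
    by_cases ht : 0 < t
    · rw [Set.indicator_of_mem (show t ∈ Set.Ioi 0 from ht)]
      simp only [hf, max_eq_left ht.le]
    · rw [Set.indicator_of_notMem (by simpa using ht), hfz t (not_lt.mp ht), mul_zero]
  have hfi : Integrable f := by
    have := hind 1
    simp only [Pi.one_apply, one_mul] at this
    rw [show f = fun t => f t from rfl, this, integrable_indicator_iff measurableSet_Ioi]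
    exact (gam_int hs0).ofReal
  have hF : ∀ γ : ℝ, FourierTransform.fourier f γ = phi s (-γ) := by
    intro γ
    rw [Real.fourier_real_eq_integral_exp_smul]
    simp only [smul_eq_mul]
    rw [hind, integral_indicator measurableSet_Ioi]
    refine setIntegral_congr_fun measurableSet_Ioi fun t _ => ?_
    simp only [phK]
    rw [mul_comm]
    congr 2
    push_cast
    ring
  have hF' : FourierTransform.fourier f = fun γ : ℝ => (c:ℂ) * (1 - 2 * I * ((-γ : ℝ) : ℂ)) ^ (-(s:ℂ)) := by
    funext γ
    rw [hF, phi_val hs0]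
  have hFi : Integrable (FourierTransform.fourier f) := by
    rw [hF']
    exact ((cpow_neg_int hs).comp_neg).const_mul _
  have hinv := congrFun (hfc.fourierInv_fourier_eq hfi hFi) 1
  rw [Real.fourierInv_eq_fourier_neg, Real.fourier_real_eq_integral_exp_smul, hF'] at hinv
  have hf1 : f 1 = ((Real.exp (-Real.pi) : ℝ) : ℂ) := by simp [hf]
  rw [hf1, ← integral_neg_eq_self] at hinv
  have hcC : (c:ℂ) ≠ 0 := by exact_mod_cast hc0.ne'
  push_cast
  rw [eq_div_iff hcC, mul_comm, ← integral_const_mul]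
  push_cast at hinv
  rw [← hinv]
  congr 1
  funext γ
  simp only [smul_eq_mul, neg_neg]
  rw [mul_comm (cexp _), ← mul_assoc]
  congr 2
  ring

end CM

end

section
open Complex Filter Topology MeasureTheory
namespace CM

noncomputable def tht (b d : ℤ) (Y α : ℝ) (t : ℤ) : ℂ :=
  cexp (-Real.pi * b / Y * t ^ 2 + 2 * Real.pi * I * (α * (d * t + b * t ^ 2)))

theorem tht_eq (b d : ℤ) (Y α : ℝ) (t : ℤ) : tht b d Y α t =
    (Real.exp (-(Real.pi * b / Y) * t ^ 2) : ℝ) * cexp (2 * Real.pi * I * (α * ((d * t + b * t ^ 2 : ℤ) : ℂ))) := by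
  rw [tht, Complex.exp_add]
  push_cast
  congr 2
  ring

theorem norm_e2 (x : ℝ) : ‖cexp (2 * Real.pi * I * x)‖ = 1 := by
  have : (2 * Real.pi * I * x : ℂ) = ((2 * Real.pi * x : ℝ) : ℂ) * I := by
    push_cast; ring
  rw [this, Complex.norm_exp_ofReal_mul_I]

theorem tht_norm (b d : ℤ) (Y α : ℝ) (t : ℤ) :
    ‖tht b d Y α t‖ = Real.exp (-(Real.pi * b / Y) * t ^ 2) := by
  rw [tht_eq, norm_mul, Complex.norm_real, Real.norm_of_nonneg (by positivity)]
  have := norm_e2 (α * ((d * t + b * t ^ 2 : ℤ) : ℝ))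
  push_cast at this ⊢
  rw [this, mul_one]

theorem tht_cont (b d : ℤ) (Y : ℝ) (t : ℤ) : Continuous fun α => tht b d Y α t := by
  unfold tht
  fun_prop

theorem gsum (b : ℤ) (hb : 0 < b) {Y : ℝ} (hY : 0 < Y) :
    Summable fun t : ℤ => Real.exp (-(Real.pi * b / Y) * (t:ℝ) ^ 2) := by
  have hb' : (0:ℝ) < b := by exact_mod_cast hb
  have := Real.pi_pos
  have := summable_gauss (c := Real.pi * b / Y) (by positivity) 0
  simpa using this

theorem th_cont {b : ℤ} (hb : 0 < b) (d : ℤ) {Y : ℝ} (hY : 0 < Y) : Continuous (th b d Y) := by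
  exact continuous_tsum (fun t => tht_cont b d Y t) (gsum b hb hY) (fun t α => (tht_norm b d Y α t).le)

variable {r : ℕ}

noncomputable def PP (b d : Fin r → ℤ) (Y α : ℝ) : ℂ := ∏ i, th (b i) (d i) Y α

def sols (b d : Fin r → ℤ) (n : ℕ) : Set (Fin r → ℤ) :=
  {t | ∑ i, (d i * t i + b i * t i ^ 2) = n}

theorem PP_cont {b : Fin r → ℤ} (hb : ∀ i, 0 < b i) (d : Fin r → ℤ) {Y : ℝ} (hY : 0 < Y) :
    Continuous (PP b d Y) :=
  continuous_finsetProd _ fun i _ => th_cont (hb i) (d i) hY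

theorem sols_finite {b d : Fin r → ℤ} (hb : ∀ i, 0 < b i) (hd : ∀ i, d i ^ 2 ≤ 1) (n : ℕ) :
    (sols b d n).Finite := by
  refine (Finset.finite_toSet (Fintype.piFinset fun _ : Fin r => Finset.Icc (-(n + 1 : ℤ)) (n + 1))).subset ?_
  intro t ht
  have hnn : ∀ i, 0 ≤ d i * t i + b i * t i ^ 2 ∧ t i ^ 2 - |t i| ≤ d i * t i + b i * t i ^ 2 := by
    intro i
    have h1 : |d i| ≤ 1 := by
      rw [← sq_le_one_iff_abs_le_one]; exact hd i
    have h2 : -|t i| ≤ d i * t i := by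
      have : |d i * t i| ≤ |t i| := by
        rw [abs_mul]; nlinarith [abs_nonneg (t i)]
      linarith [neg_abs_le (d i * t i)]
    have h3 : t i ^ 2 ≤ b i * t i ^ 2 := by nlinarith [hb i, sq_nonneg (t i)]
    have h4 : |t i| ≤ t i ^ 2 := by
      rw [← sq_abs]
      rcases (abs_nonneg (t i)).eq_or_lt with h | h
      · rw [← h]; simp
      · nlinarith
    constructor <;> linarith
  simp only [Finset.mem_coe, Fintype.mem_piFinset, Finset.mem_Icc]
  intro i
  have h5 : d i * t i + b i * t i ^ 2 ≤ n := by
    have ht' : ∑ i, (d i * t i + b i * t i ^ 2) = n := ht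
    rw [← ht']
    exact Finset.single_le_sum (f := fun i => d i * t i + b i * t i ^ 2) (fun i _ => (hnn i).1) (Finset.mem_univ i)
  have h6 : |t i| ≤ n + 1 := by
    have h := (hnn i).2.trans h5
    rw [← sq_abs] at h
    by_contra hc
    push Not at hc
    nlinarith [abs_nonneg (t i)]
  exact abs_le.mp h6

theorem int_e (k : ℤ) : ∫ α in (-(1/2):ℝ)..(1/2), cexp (2 * Real.pi * I * (α * (k:ℂ))) = if k = 0 then 1 else 0 := by
  split_ifs with h
  · subst h
    simp
    norm_num
  · have hk : (2 * Real.pi * I * k : ℂ) ≠ 0 := by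
      have : (k:ℂ) ≠ 0 := by exact_mod_cast h
      have hp : (Real.pi : ℂ) ≠ 0 := by exact_mod_cast Real.pi_ne_zero
      exact mul_ne_zero (mul_ne_zero (mul_ne_zero two_ne_zero hp) I_ne_zero) this
    have e : ∀ α : ℝ, cexp (2 * Real.pi * I * (α * (k:ℂ))) = cexp ((2 * Real.pi * I * k) * α) := by
      intro α; congr 1; ring
    simp_rw [e]
    rw [integral_exp_mul_complex hk]
    have := exp_int (-(k:ℂ) / 2) k
    rw [div_eq_zero_iff]
    left
    rw [sub_eq_zero]
    push_cast
    convert this using 2 <;> ring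

theorem count_ge {b d : Fin r → ℤ} (hb : ∀ i, 0 < b i) (hd : ∀ i, d i ^ 2 ≤ 1) {n : ℕ} (hn : 0 < n) :
    ‖∫ α in (-(1/2):ℝ)..(1/2), PP b d n α * cexp (-(2 * Real.pi * I * (α * n)))‖ ≤ (sols b d n).ncard := by
  classical
  have hn' : (0:ℝ) < n := by exact_mod_cast hn
  have hlim : Tendsto (fun S : Finset ℤ => ∫ α in (-(1/2):ℝ)..(1/2),
      (∏ i, ∑ t ∈ S, tht (b i) (d i) n α t) * cexp (-(2 * Real.pi * I * (α * n)))) atTop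
      (𝓝 (∫ α in (-(1/2):ℝ)..(1/2), PP b d n α * cexp (-(2 * Real.pi * I * (α * n))))) := by
    refine intervalIntegral.tendsto_integral_filter_of_dominated_convergence
      (fun _ => ∏ i, ∑' t : ℤ, Real.exp (-(Real.pi * b i / n) * (t:ℝ) ^ 2)) ?_ ?_ (by simp) ?_
    · refine Eventually.of_forall fun S => Continuous.aestronglyMeasurable ?_
      have := fun i t => tht_cont (b i) (d i) n t
      fun_prop
    · refine Eventually.of_forall fun S => Eventually.of_forall fun α _ => ?_
      have h1 : ‖cexp (-(2 * Real.pi * I * (α * n)))‖ = 1 := by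
        have := norm_e2 (-(α * n))
        push_cast at this
        rw [mul_neg] at this
        exact this
      rw [norm_mul, h1, mul_one, norm_prod]
      refine Finset.prod_le_prod (fun _ _ => norm_nonneg _) fun i _ => ?_
      refine (norm_sum_le _ _).trans ?_
      simp_rw [tht_norm]
      exact (gsum (b i) (hb i) hn').sum_le_tsum _ (fun _ _ => by positivity)
    · refine Eventually.of_forall fun α _ => Tendsto.mul_const _ ?_
      refine tendsto_finsetProd _ fun i _ => ?_
      exact (th_summable (d i) (hb i) hn' α).hasSum
  refine le_of_tendsto hlim.norm (Eventually.of_forall fun S => ?_)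
  have e1 : ∀ α : ℝ, (∏ i, ∑ t ∈ S, tht (b i) (d i) n α t) * cexp (-(2 * Real.pi * I * (α * n))) =
      ∑ t ∈ Fintype.piFinset (fun _ : Fin r => S), ((∏ i, Real.exp (-(Real.pi * b i / n) * (t i : ℝ) ^ 2) : ℝ) : ℂ) *
        cexp (2 * Real.pi * I * (α * ((∑ i, (d i * t i + b i * t i ^ 2) - n : ℤ) : ℂ))) := by
    intro α
    rw [Finset.prod_univ_sum, Finset.sum_mul]
    refine Finset.sum_congr rfl fun t _ => ?_
    simp_rw [tht_eq]
    rw [Finset.prod_mul_distrib, ← Complex.exp_sum, mul_assoc, ← Complex.exp_add]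
    push_cast
    congr 2
    rw [← Finset.mul_sum, ← Finset.mul_sum]
    ring
  simp_rw [e1]
  rw [intervalIntegral.integral_finsetSum (fun t _ => Continuous.intervalIntegrable (by fun_prop) _ _)]
  simp_rw [intervalIntegral.integral_const_mul, int_e]
  refine (norm_sum_le _ _).trans ?_
  have hle : ∀ t ∈ Fintype.piFinset (fun _ : Fin r => S),
      ‖((∏ i, Real.exp (-(Real.pi * b i / n) * (t i : ℝ) ^ 2) : ℝ) : ℂ) *
        (if ∑ i, (d i * t i + b i * t i ^ 2) - (n:ℤ) = 0 then 1 else 0)‖ ≤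
      if t ∈ sols b d n then (1:ℝ) else 0 := by
    intro t _
    have : (∑ i, (d i * t i + b i * t i ^ 2) - (n:ℤ) = 0) ↔ t ∈ sols b d n := by
      rw [sub_eq_zero]; rfl
    by_cases h : t ∈ sols b d n
    · rw [if_pos (this.mpr h), if_pos h, mul_one, Complex.norm_real, Real.norm_of_nonneg (by positivity)]
      refine Finset.prod_le_one (fun _ _ => by positivity) fun i _ => ?_
      rw [Real.exp_le_one_iff]
      have hb' : (0:ℝ) < b i := by exact_mod_cast hb i
      have := Real.pi_pos
      have : 0 ≤ Real.pi * b i / n * (t i : ℝ) ^ 2 := by positivity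
      linarith
    · rw [if_neg (fun h' => h (this.mp h')), if_neg h, mul_zero, norm_zero]
  refine (Finset.sum_le_sum hle).trans ?_
  rw [Finset.sum_boole, Nat.cast_le, ← Set.ncard_coe_finset]
  refine Set.ncard_le_ncard ?_ (sols_finite hb hd n)
  intro t ht
  simp at ht
  exact ht.2

end CM

end

section
open Complex Filter Topology MeasureTheory
namespace CM
variable {r : ℕ}

noncomputable def hN (b d : Fin r → ℤ) (n q : ℕ) (a : ℤ) (α : ℝ) : ℂ :=
  if (q:ℝ) ^ 2 ≤ n ∧ (q:ℝ) ^ 2 * (n * (α - a / q)) ^ 2 ≤ n then PP b d n α else 0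

noncomputable def HN (b d : Fin r → ℤ) (n q : ℕ) (a : ℤ) (γ : ℝ) : ℂ :=
  hN b d n q a (a / q + γ / n) / ((√n : ℝ) : ℂ) ^ r

noncomputable def HL (b d : Fin r → ℤ) (q : ℕ) (a : ℤ) (γ : ℝ) : ℂ :=
  ∏ i, gs (b i) (d i) q a 0 / (b i * (1 - 2 * I * γ) * q ^ 2) ^ (1 / 2 : ℂ)

theorem HN_eq (b d : Fin r → ℤ) {n : ℕ} (hn : 0 < n) (q : ℕ) (a : ℤ) (γ : ℝ) :
    HN b d n q a γ = if (q:ℝ) ^ 2 ≤ n ∧ (q:ℝ) ^ 2 * γ ^ 2 ≤ n then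
      ∏ i, (th (b i) (d i) n (a / q + γ / n) / ((√n : ℝ) : ℂ)) else 0 := by
  have hn' : (n:ℝ) ≠ 0 := by exact_mod_cast hn.ne'
  have e : (n:ℝ) * ((a / q + γ / n) - a / q) = γ := by
    field_simp
    ring
  rw [HN, hN, e]
  split_ifs
  · rw [Finset.prod_div_distrib, Finset.prod_const, Finset.card_univ, Fintype.card_fin]
    rfl
  · simp

theorem HN_upper (hr : 5 ≤ r) {b d : Fin r → ℤ} (hb : ∀ i, 0 < b i) (hd : ∀ i, d i ^ 2 ≤ 1) :
    ∃ C : ℝ, 0 < C ∧ ∀ (n q : ℕ) (a : ℤ) (γ : ℝ), 0 < n → 0 < q → IsCoprime a (q:ℤ) →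
      ‖HN b d n q a γ‖ ≤ C * ((q:ℝ) ^ (-(5/2) : ℝ) * (1 + 4 * γ ^ 2) ^ (-(5/2) / 2 : ℝ)) := by
  choose C hC0 hC using fun i => th_upper (hb i) (d i) (hd i)
  refine ⟨∏ i, C i, Finset.prod_pos fun i _ => hC0 i, ?_⟩
  intro n q a γ hn hq ha
  have hn' : (0:ℝ) < n := by exact_mod_cast hn
  have hq1 : (1:ℝ) ≤ q := by exact_mod_cast hq
  have hP : 0 < ∏ i, C i := Finset.prod_pos fun i _ => hC0 i
  rw [HN_eq b d hn]
  split_ifs with h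
  · rw [norm_prod]
    have h1 : ∀ i ∈ Finset.univ, ‖th (b i) (d i) n (a / q + γ / n) / ((√n : ℝ) : ℂ)‖ ≤
        C i * ((q:ℝ) ^ (-(1/2) : ℝ) * (1 + 4 * γ ^ 2) ^ (-(1/4) : ℝ)) := by
      intro i _
      have hs : 0 < √(n:ℝ) := Real.sqrt_pos.mpr hn'
      rw [norm_div, Complex.norm_real, Real.norm_of_nonneg hs.le, div_le_iff₀ hs]
      have := hC i n q a γ (by exact_mod_cast hn) hq h.1 ha h.2
      linarith
    refine (Finset.prod_le_prod (fun _ _ => norm_nonneg _) h1).trans ?_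
    rw [Finset.prod_mul_distrib, Finset.prod_const, Finset.card_univ, Fintype.card_fin]
    gcongr
    have e1 : (q:ℝ) ^ (-(5/2) : ℝ) = ((q:ℝ) ^ (-(1/2) : ℝ)) ^ 5 := by
      rw [← Real.rpow_mul_natCast (by positivity)]; norm_num
    have e2 : (1 + 4 * γ ^ 2) ^ (-(5/2) / 2 : ℝ) = ((1 + 4 * γ ^ 2) ^ (-(1/4) : ℝ)) ^ 5 := by
      rw [← Real.rpow_mul_natCast (by positivity)]; norm_num
    rw [e1, e2, ← mul_pow]
    refine pow_le_pow_of_le_one (by positivity) ?_ hr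
    refine mul_le_one₀ ?_ (by positivity) ?_
    · exact Real.rpow_le_one_of_one_le_of_nonpos hq1 (by norm_num)
    · exact Real.rpow_le_one_of_one_le_of_nonpos (by nlinarith [sq_nonneg γ]) (by norm_num)
  · rw [norm_zero]; positivity

theorem HN_lim {b : Fin r → ℤ} (hb : ∀ i, 0 < b i) (d : Fin r → ℤ) {q : ℕ} (hq : 0 < q)
    (a : ℤ) (ha : IsCoprime a (q:ℤ)) (γ : ℝ) :
    Tendsto (fun n => HN b d n q a γ) atTop (𝓝 (HL b d q a γ)) := by
  have h := tendsto_finsetProd Finset.univ fun i _ => th_lim (hb i) (d i) hq a ha γ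
  refine h.congr' ?_
  filter_upwards [eventually_gt_atTop 0,
    (tendsto_natCast_atTop_atTop (R := ℝ)).eventually_ge_atTop ((q:ℝ) ^ 2),
    (tendsto_natCast_atTop_atTop (R := ℝ)).eventually_ge_atTop ((q:ℝ) ^ 2 * γ ^ 2)] with n hn h1 h2
  rw [HN_eq b d hn, if_pos ⟨h1, h2⟩]

theorem arc_closed (n q : ℕ) (a : ℤ) :
    IsClosed {α : ℝ | (q:ℝ) ^ 2 ≤ n ∧ (q:ℝ) ^ 2 * (n * (α - a / q)) ^ 2 ≤ n} := by
  refine IsClosed.and ?_ ?_ <;> exact isClosed_le (by fun_prop) (by fun_prop)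

theorem hN_ind (b d : Fin r → ℤ) (n q : ℕ) (a : ℤ) : hN b d n q a = Set.indicator
    {α : ℝ | (q:ℝ) ^ 2 ≤ n ∧ (q:ℝ) ^ 2 * (n * (α - a / q)) ^ 2 ≤ n} (PP b d n) := by
  funext α
  rw [hN, Set.indicator]
  congr

theorem hN_meas {b : Fin r → ℤ} (hb : ∀ i, 0 < b i) (d : Fin r → ℤ) {n : ℕ} (hn : 0 < n) (q : ℕ) (a : ℤ) :
    Measurable (hN b d n q a) := by
  rw [hN_ind]
  have hn' : (0:ℝ) < n := by exact_mod_cast hn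
  exact (PP_cont hb d hn').measurable.indicator (arc_closed n q a).measurableSet

theorem arc_bound {n q : ℕ} (hn : 0 < n) (hq : 0 < q) {x : ℝ}
    (h : (q:ℝ) ^ 2 * (n * x) ^ 2 ≤ n) : n * x ^ 2 ≤ 1 := by
  have hn' : (0:ℝ) < n := by exact_mod_cast hn
  have hq1 : (1:ℝ) ≤ q := by exact_mod_cast hq
  have h1 : (n * x) ^ 2 ≤ n := by
    refine le_trans ?_ h
    have : (1:ℝ) ≤ q ^ 2 := one_le_pow₀ hq1
    nlinarith [sq_nonneg (n * x)]
  have h2 : (n:ℝ) * (n * x ^ 2) ≤ n * 1 := by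
    rw [mul_one]; refine le_trans (le_of_eq ?_) h1; ring
  exact le_of_mul_le_mul_left h2 hn'

theorem hN_int {b : Fin r → ℤ} (hb : ∀ i, 0 < b i) (d : Fin r → ℤ) {n : ℕ} (hn : 0 < n) {q : ℕ} (hq : 0 < q)
    (a : ℤ) : Integrable (hN b d n q a) := by
  rw [hN_ind, integrable_indicator_iff (arc_closed n q a).measurableSet]
  have hn' : (0:ℝ) < n := by exact_mod_cast hn
  have hn1 : (1:ℝ) ≤ n := by exact_mod_cast hn
  refine ((PP_cont hb d hn').continuousOn.integrableOn_compact
    (isCompact_Icc (a := (a:ℝ) / q - 1) (b := a / q + 1))).mono_set ?_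
  rintro α ⟨_, h⟩
  have h2 := arc_bound hn hq h
  have h3 : (α - a / q) ^ 2 ≤ 1 := by nlinarith [sq_nonneg (α - a / q)]
  have h4 := abs_le.mp ((sq_le_one_iff_abs_le_one _).mp h3)
  constructor <;> linarith [h4.1, h4.2]

theorem cov {E : Type*} [NormedAddCommGroup E] [NormedSpace ℝ E] (f : ℝ → E) {n : ℕ} (x : ℝ) :
    ∫ γ : ℝ, f (x + γ / n) = (n:ℝ) • ∫ α, f α := by
  rw [Measure.integral_comp_div (fun y => f (x + y)), integral_add_left_eq_self f x]
  simp

noncomputable def AS (q : ℕ) : Finset ℤ := (Finset.Icc (-(q:ℤ)) q).filter fun a => Int.gcd a q = 1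

theorem mem_AS {q : ℕ} {a : ℤ} : a ∈ AS q ↔ (-(q:ℤ) ≤ a ∧ a ≤ q) ∧ IsCoprime a (q:ℤ) := by
  rw [AS, Finset.mem_filter, Finset.mem_Icc, Int.isCoprime_iff_gcd_eq_one]

theorem AS_card (q : ℕ) : ((AS q).card : ℝ) ≤ 2 * q + 1 := by
  have h : (AS q).card ≤ 2 * q + 1 := by
    refine (Finset.card_filter_le _ _).trans ?_
    rw [Int.card_Icc]; omega
  exact_mod_cast h

theorem dirichlet {n : ℕ} (hn : 4 ≤ n) {α : ℝ} (hα : |α| ≤ 1 / 2) :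
    ∃ (q : ℕ) (a : ℤ), 0 < q ∧ q ≤ Nat.sqrt n ∧ a ∈ AS q ∧ (q = 1 → a = 0) ∧
      (q:ℝ) ^ 2 ≤ n ∧ (q:ℝ) ^ 2 * (n * (α - a / q)) ^ 2 ≤ n := by
  have hN2 : 2 ≤ Nat.sqrt n := Nat.le_sqrt'.mpr (by omega)
  set N := Nat.sqrt n with hN
  obtain ⟨x, hx1, hx2⟩ := Real.exists_rat_abs_sub_le_and_den_le α (n := N) (by omega)
  have hq0 : 0 < x.den := x.den_pos
  have hq1 : (1:ℝ) ≤ x.den := by exact_mod_cast hq0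
  have hN2' : (2:ℝ) ≤ N := by exact_mod_cast hN2
  have hxe : (x:ℝ) = x.num / x.den := by exact_mod_cast (Rat.cast_def (K := ℝ) x)
  rw [hxe] at hx1
  have hNn : (N:ℝ) ^ 2 ≤ n := by exact_mod_cast Nat.sqrt_le' n
  have hNn1 : (n:ℝ) < (N + 1) ^ 2 := by exact_mod_cast Nat.lt_succ_sqrt' n
  have hA : |α * x.den - x.num| ≤ 1 / (N + 1) := by
    have : α * x.den - x.num = (α - x.num / x.den) * x.den := by field_simp
    rw [this, abs_mul, abs_of_pos (by linarith : (0:ℝ) < x.den)]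
    calc _ ≤ 1 / ((N + 1) * (x.den:ℝ)) * x.den := by gcongr
      _ = _ := by field_simp
  have hA3 : (1:ℝ) / (N + 1) ≤ 1 / 3 := by
    apply one_div_le_one_div_of_le <;> linarith
  have hnum : |(x.num : ℝ)| ≤ x.den / 2 + 1 / 3 := by
    have h1 : |α * x.den| ≤ x.den / 2 := by
      rw [abs_mul, abs_of_pos (by linarith : (0:ℝ) < x.den)]
      nlinarith
    have := abs_le.mp (hA.trans hA3)
    have := abs_le.mp h1
    rw [abs_le]; constructor <;> linarith
  refine ⟨x.den, x.num, hq0, hx2, mem_AS.mpr ⟨?_, Rat.isCoprime_num_den x⟩, ?_, ?_, ?_⟩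
  · have : |(x.num : ℝ)| ≤ x.den := by linarith
    have : |x.num| ≤ (x.den : ℤ) := by exact_mod_cast this
    exact abs_le.mp this
  · intro h1
    rw [h1] at hnum
    have : |(x.num : ℝ)| < 1 := by norm_num at hnum ⊢; linarith
    have : |x.num| < 1 := by exact_mod_cast this
    exact Int.abs_lt_one_iff.mp this
  · have : (x.den : ℝ) ≤ N := by exact_mod_cast hx2
    calc (x.den : ℝ) ^ 2 ≤ (N:ℝ) ^ 2 := by gcongr
      _ ≤ (n:ℝ) := hNn
  · have e : (x.den : ℝ) ^ 2 * (n * (α - x.num / x.den)) ^ 2 = n * (n * (α * x.den - x.num) ^ 2) := by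
      field_simp
    rw [e]
    have h2 : (α * x.den - x.num) ^ 2 ≤ (1 / (N + 1)) ^ 2 := by
      rw [← sq_abs]; gcongr
    have h3 : (n:ℝ) * (α * x.den - x.num) ^ 2 ≤ 1 := by
      calc (n:ℝ) * (α * x.den - x.num) ^ 2 ≤ (N + 1) ^ 2 * (1 / (N + 1)) ^ 2 := by gcongr
        _ = 1 := by field_simp
    have : (0:ℝ) ≤ n := by positivity
    nlinarith

theorem core {b : Fin r → ℤ} (hb : ∀ i, 0 < b i) (d : Fin r → ℤ) {n : ℕ} (hn : 4 ≤ n) :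
    ‖(n:ℂ) / ((√n : ℝ) : ℂ) ^ r * (∫ α in (-(1/2):ℝ)..(1/2), PP b d n α * cexp (-(2 * Real.pi * I * (α * n))))
      - ∫ γ : ℝ, HN b d n 1 0 γ * cexp (-(2 * Real.pi * I * γ))‖ ≤
      ∑ q ∈ Finset.Icc 2 (Nat.sqrt n), ∑ a ∈ AS q, ∫ γ : ℝ, ‖HN b d n q a γ‖ := by
  have hn0 : 0 < n := by omega
  have hn' : (0:ℝ) < n := by exact_mod_cast hn0
  have hnC : (n:ℂ) ≠ 0 := by exact_mod_cast hn0.ne'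
  have hs : 0 < √(n:ℝ) := Real.sqrt_pos.mpr hn'
  have hsC : ((√n : ℝ) : ℂ) ≠ 0 := by exact_mod_cast hs.ne'
  set e : ℝ → ℂ := fun α => cexp (-(2 * Real.pi * I * (α * n))) with he
  have hec : Continuous e := by simp only [he]; fun_prop
  have hen : ∀ α, ‖e α‖ = 1 := by
    intro α
    have := norm_e2 (-(α * n))
    push_cast at this
    rw [mul_neg] at this
    exact this
  have h1 : ∫ γ : ℝ, HN b d n 1 0 γ * cexp (-(2 * Real.pi * I * γ)) =
      (n:ℂ) / ((√n : ℝ) : ℂ) ^ r * ∫ α, hN b d n 1 0 α * e α := by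
    have := cov (fun α => hN b d n 1 0 α * e α) (n := n) (((0:ℤ):ℝ) / ((1:ℕ):ℝ))
    rw [div_mul_eq_mul_div, eq_div_iff (pow_ne_zero _ hsC)]
    rw [Complex.real_smul] at this
    push_cast at this ⊢
    rw [← this, ← integral_mul_const]
    congr 1
    funext γ
    simp only [HN, he]
    push_cast
    have hp : ((√n : ℝ) : ℂ) ^ r ≠ 0 := pow_ne_zero _ hsC
    have e4 : (0 / 1 + (γ:ℂ) / n) * n = γ := by field_simp; ring
    rw [e4]
    field_simp
  have h2 : ∀ q a, ∫ γ : ℝ, ‖HN b d n q a γ‖ = n / (√n) ^ r * ∫ α, ‖hN b d n q a α‖ := by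
    intro q a
    have := cov (fun α => ‖hN b d n q a α‖) (n := n) ((a:ℝ) / q)
    rw [div_mul_eq_mul_div, eq_div_iff (pow_ne_zero _ hs.ne')]
    rw [smul_eq_mul] at this
    rw [← this, ← integral_mul_const]
    congr 1
    funext γ
    rw [HN, norm_div, norm_pow, Complex.norm_real, Real.norm_of_nonneg hs.le]
    have hp : √(n:ℝ) ^ r ≠ 0 := pow_ne_zero _ hs.ne'
    field_simp
  simp_rw [h2]
  simp_rw [← Finset.mul_sum]
  rw [h1, ← mul_sub, norm_mul]
  have e3 : ‖(n:ℂ) / ((√n : ℝ) : ℂ) ^ r‖ = n / (√n) ^ r := by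
    rw [norm_div, norm_pow, Complex.norm_real, Real.norm_of_nonneg hs.le, Complex.norm_natCast]
  rw [e3]
  gcongr
  have hle : (-(1/2):ℝ) ≤ 1/2 := by norm_num
  -- restrict the major arc
  have h3 : ∫ α, hN b d n 1 0 α * e α = ∫ α in (-(1/2):ℝ)..(1/2), hN b d n 1 0 α * e α := by
    rw [intervalIntegral.integral_of_le hle, ← integral_Icc_eq_integral_Ioc]
    symm
    apply setIntegral_eq_integral_of_forall_compl_eq_zero
    intro α hα
    have : hN b d n 1 0 α = 0 := by
      rw [hN, if_neg]
      rintro ⟨_, h⟩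
      apply hα
      have h5 := arc_bound hn0 one_pos h
      have hn4 : (4:ℝ) ≤ n := by exact_mod_cast hn
      have h6 : (α) ^ 2 ≤ (1/2) ^ 2 := by
        push_cast at h5
        rw [zero_div, sub_zero] at h5
        nlinarith [sq_nonneg α]
      have h7 := abs_le_of_sq_le_sq' h6 (by norm_num)
      exact h7
    rw [this, zero_mul]
  have hintg : ∀ q a, 0 < q → Integrable (fun α => ‖hN b d n q a α‖) := fun q a hq => (hN_int hb d hn0 hq a).norm
  rw [h3, ← intervalIntegral.integral_sub]
  rotate_left
  · exact Continuous.intervalIntegrable ((PP_cont hb d hn').mul hec) _ _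
  · refine IntegrableOn.intervalIntegrable (Integrable.integrableOn ?_)
    exact (hN_int hb d hn0 one_pos 0).mul_bdd (c := 1) hec.aestronglyMeasurable (Eventually.of_forall fun α => (hen α).le)
  have hsumint : Integrable (fun α => ∑ q ∈ Finset.Icc 2 (Nat.sqrt n), ∑ a ∈ AS q, ‖hN b d n q a α‖) := by
    refine integrable_finsetSum _ fun q hq => integrable_finsetSum _ fun a _ => hintg q a ?_
    rw [Finset.mem_Icc] at hq; omega
  have e5 : ∑ q ∈ Finset.Icc 2 (Nat.sqrt n), ∑ a ∈ AS q, ∫ α, ‖hN b d n q a α‖ =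
      ∫ α, ∑ q ∈ Finset.Icc 2 (Nat.sqrt n), ∑ a ∈ AS q, ‖hN b d n q a α‖ := by
    rw [integral_finsetSum]
    · refine Finset.sum_congr rfl fun q hq => ?_
      rw [integral_finsetSum]
      intro a _
      apply hintg q a; rw [Finset.mem_Icc] at hq; omega
    · intro q hq
      refine integrable_finsetSum _ fun a _ => hintg q a ?_
      rw [Finset.mem_Icc] at hq; omega
  rw [e5]
  have hnn : ∀ α, 0 ≤ ∑ q ∈ Finset.Icc 2 (Nat.sqrt n), ∑ a ∈ AS q, ‖hN b d n q a α‖ :=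
    fun α => Finset.sum_nonneg fun q _ => Finset.sum_nonneg fun a _ => norm_nonneg _
  refine (intervalIntegral.norm_integral_le_of_norm_le hle (g := fun α => ∑ q ∈ Finset.Icc 2 (Nat.sqrt n), ∑ a ∈ AS q, ‖hN b d n q a α‖) ?_ hsumint.intervalIntegrable).trans ?_
  · refine Eventually.of_forall fun α hα => ?_
    rw [← sub_mul, norm_mul, hen, mul_one]
    by_cases h : (((1:ℕ):ℝ) ^ 2 ≤ n ∧ ((1:ℕ):ℝ) ^ 2 * (n * (α - ((0:ℤ):ℝ) / ((1:ℕ):ℝ))) ^ 2 ≤ n)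
    · rw [hN, if_pos h, sub_self, norm_zero]
      exact hnn α
    · rw [hN, if_neg h, sub_zero]
      obtain ⟨q, a, hq0, hqN, ha, hqa, h5, h6⟩ := dirichlet hn (α := α) (abs_le.mpr ⟨hα.1.le, hα.2⟩)
      have hq2 : 2 ≤ q := by
        rcases Nat.lt_or_ge q 2 with h' | h'
        · exfalso
          have hq1 : q = 1 := by omega
          have ha0 := hqa hq1
          subst hq1 ha0
          exact h ⟨h5, h6⟩
        · exact h'
      calc ‖PP b d n α‖ = ‖hN b d n q a α‖ := by rw [hN, if_pos ⟨h5, h6⟩]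
        _ ≤ ∑ a ∈ AS q, ‖hN b d n q a α‖ :=
          Finset.single_le_sum (f := fun a => ‖hN b d n q a α‖) (fun a _ => norm_nonneg _) ha
        _ ≤ _ := Finset.single_le_sum (f := fun q => ∑ a ∈ AS q, ‖hN b d n q a α‖)
          (fun q _ => Finset.sum_nonneg fun a _ => norm_nonneg _) (Finset.mem_Icc.mpr ⟨hq2, hqN⟩)
  · rw [intervalIntegral.integral_of_le hle]
    exact setIntegral_le_integral hsumint (Eventually.of_forall hnn)

end CM

end

section
open Complex Filter Topology MeasureTheory
namespace CM
variable {r : ℕ}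

noncomputable def KK : ℝ := ∫ γ : ℝ, (1 + 4 * γ ^ 2) ^ (-(5/2) / 2 : ℝ)

theorem br_int : Integrable (fun γ : ℝ => (1 + 4 * γ ^ 2) ^ (-(5/2) / 2 : ℝ)) :=
  bracket_int (by norm_num)

theorem KK_nonneg : 0 ≤ KK := integral_nonneg fun γ => by positivity

theorem HN_meas {b : Fin r → ℤ} (hb : ∀ i, 0 < b i) (d : Fin r → ℤ) {n : ℕ} (hn : 0 < n) (q : ℕ) (a : ℤ) :
    Measurable (HN b d n q a) := by
  unfold HN
  exact ((hN_meas hb d hn q a).comp (by fun_prop)).div_const _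

theorem main_lim (hr : 5 ≤ r) {b d : Fin r → ℤ} (hb : ∀ i, 0 < b i) (hd : ∀ i, d i ^ 2 ≤ 1) :
    Tendsto (fun n : ℕ => ∫ γ : ℝ, HN b d n 1 0 γ * cexp (-(2 * Real.pi * I * γ))) atTop
      (𝓝 (∫ γ : ℝ, HL b d 1 0 γ * cexp (-(2 * Real.pi * I * γ)))) := by
  obtain ⟨C, hC0, hC⟩ := HN_upper hr hb hd
  refine tendsto_integral_filter_of_dominated_convergence
    (fun γ => C * (((1:ℕ):ℝ) ^ (-(5/2) : ℝ) * (1 + 4 * γ ^ 2) ^ (-(5/2) / 2 : ℝ))) ?_ ?_ ?_ ?_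
  · filter_upwards [eventually_gt_atTop 0] with n hn
    exact ((HN_meas hb d hn 1 0).mul (by fun_prop)).aestronglyMeasurable
  · filter_upwards [eventually_gt_atTop 0] with n hn
    refine Eventually.of_forall fun γ => ?_
    have : ‖cexp (-(2 * Real.pi * I * γ))‖ = 1 := by
      have := norm_e2 (-γ)
      push_cast at this
      rw [mul_neg] at this
      exact this
    rw [norm_mul, this, mul_one]
    exact hC n 1 0 γ hn one_pos (by simp [isCoprime_one_right])
  · exact (br_int.const_mul _).const_mul _
  · exact Eventually.of_forall fun γ => (HN_lim hb d one_pos 0 (by simp [isCoprime_one_right]) γ).mul_const _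

noncomputable def eN (b d : Fin r → ℤ) (n q : ℕ) : ℝ :=
  if 2 ≤ q then ∑ a ∈ AS q, ∫ γ : ℝ, ‖HN b d n q a γ‖ else 0

noncomputable def eL (b d : Fin r → ℤ) (q : ℕ) : ℝ :=
  if 2 ≤ q then ∑ a ∈ AS q, ∫ γ : ℝ, ‖HL b d q a γ‖ else 0

theorem eN_nonneg (b d : Fin r → ℤ) (n q : ℕ) : 0 ≤ eN b d n q := by
  unfold eN
  split_ifs
  · exact Finset.sum_nonneg fun a _ => integral_nonneg fun γ => norm_nonneg _
  · rfl

theorem card_pow {q : ℕ} (hq : 0 < q) : ((AS q).card : ℝ) * (q:ℝ) ^ (-(5/2) : ℝ) ≤ 3 * (q:ℝ) ^ (-(3/2) : ℝ) := by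
  have hq' : (1:ℝ) ≤ q := by exact_mod_cast hq
  have h0 : (q:ℝ) ≠ 0 := by positivity
  have e : (q:ℝ) ^ (-(3/2) : ℝ) = (q:ℝ) ^ (-(5/2) : ℝ) * q := by
    rw [← Real.rpow_add_one h0]; norm_num
  rw [e]
  have h1 := AS_card q
  have h2 : (0:ℝ) ≤ (q:ℝ) ^ (-(5/2) : ℝ) := by positivity
  nlinarith

theorem sum_q : Summable fun q : ℕ => (q:ℝ) ^ (-(3/2) : ℝ) := Real.summable_nat_rpow.mpr (by norm_num)

theorem eN_le (hr : 5 ≤ r) {b d : Fin r → ℤ} (hb : ∀ i, 0 < b i) (hd : ∀ i, d i ^ 2 ≤ 1) :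
    ∃ C : ℝ, 0 < C ∧ ∀ n q : ℕ, 0 < n → eN b d n q ≤ C * (q:ℝ) ^ (-(3/2) : ℝ) := by
  obtain ⟨C, hC0, hC⟩ := HN_upper hr hb hd
  refine ⟨C * KK * 3 + 1, by have := KK_nonneg; positivity, fun n q hn => ?_⟩
  have hK := KK_nonneg
  unfold eN
  split_ifs with hq
  · have hq0 : 0 < q := by omega
    calc ∑ a ∈ AS q, ∫ γ : ℝ, ‖HN b d n q a γ‖ ≤ ∑ a ∈ AS q, C * ((q:ℝ) ^ (-(5/2) : ℝ) * KK) := by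
          refine Finset.sum_le_sum fun a ha => ?_
          rw [KK, ← integral_const_mul, ← integral_const_mul]
          refine integral_mono_of_nonneg (Eventually.of_forall fun γ => norm_nonneg _)
            ((br_int.const_mul _).const_mul _) (Eventually.of_forall fun γ => ?_)
          exact hC n q a γ hn hq0 (mem_AS.mp ha).2
      _ = C * KK * ((AS q).card * (q:ℝ) ^ (-(5/2) : ℝ)) := by
          rw [Finset.sum_const, nsmul_eq_mul]; ring
      _ ≤ C * KK * (3 * (q:ℝ) ^ (-(3/2) : ℝ)) := by
          exact mul_le_mul_of_nonneg_left (card_pow hq0) (by positivity)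
      _ ≤ _ := by
          have : (0:ℝ) ≤ (q:ℝ) ^ (-(3/2) : ℝ) := by positivity
          nlinarith
  · positivity

theorem err_lim (hr : 5 ≤ r) {b d : Fin r → ℤ} (hb : ∀ i, 0 < b i) (hd : ∀ i, d i ^ 2 ≤ 1) :
    Tendsto (fun n : ℕ => ∑' q, eN b d n q) atTop (𝓝 (∑' q, eL b d q)) := by
  obtain ⟨C, hC0, hC⟩ := HN_upper hr hb hd
  obtain ⟨C', hC0', hC'⟩ := eN_le hr hb hd
  refine tendsto_tsum_of_dominated_convergence (sum_q.mul_left C') ?_ ?_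
  · intro q
    unfold eN eL
    split_ifs with hq
    · have hq0 : 0 < q := by omega
      refine tendsto_finsetSum _ fun a ha => ?_
      refine tendsto_integral_filter_of_dominated_convergence
        (fun γ => C * ((q:ℝ) ^ (-(5/2) : ℝ) * (1 + 4 * γ ^ 2) ^ (-(5/2) / 2 : ℝ))) ?_ ?_ ?_ ?_
      · filter_upwards [eventually_gt_atTop 0] with n hn
        exact (HN_meas hb d hn q a).norm.aestronglyMeasurable
      · filter_upwards [eventually_gt_atTop 0] with n hn
        refine Eventually.of_forall fun γ => ?_
        rw [norm_norm]
        exact hC n q a γ hn hq0 (mem_AS.mp ha).2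
      · exact (br_int.const_mul _).const_mul _
      · exact Eventually.of_forall fun γ => (HN_lim hb d hq0 a (mem_AS.mp ha).2 γ).norm
    · exact tendsto_const_nhds
  · filter_upwards [eventually_gt_atTop 0] with n hn q
    rw [Real.norm_of_nonneg (eN_nonneg _ _ _ _)]
    exact hC' n q hn

noncomputable def beta (b : Fin r → ℤ) : ℝ := ∏ i, (√(b i : ℝ))⁻¹

theorem half_ofReal {x : ℝ} (hx : 0 ≤ x) : (x:ℂ) ^ (1/2 : ℂ) = ((√x : ℝ) : ℂ) := by
  rw [show (1 / 2 : ℂ) = ((1 / 2 : ℝ) : ℂ) by push_cast; rfl, ← Complex.ofReal_cpow hx,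
    ← Real.sqrt_eq_rpow]

theorem denom_eq {b : ℤ} (hb : 0 < b) (q : ℕ) (hq : 0 < q) (γ : ℝ) :
    (b * (1 - 2 * I * γ) * q ^ 2 : ℂ) ^ (1 / 2 : ℂ) =
      ((√(b:ℝ) * q : ℝ) : ℂ) * (1 - 2 * I * γ : ℂ) ^ (1/2 : ℂ) := by
  have hb' : (0:ℝ) < b := by exact_mod_cast hb
  have hq' : (0:ℝ) < q := by exact_mod_cast hq
  have e : (b * (1 - 2 * I * γ) * q ^ 2 : ℂ) = ((b * (q:ℝ) ^ 2 : ℝ) : ℂ) * (1 - 2 * I * γ) := by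
    push_cast; ring
  rw [e, cpow_scale (by positivity) (one_sub_ne γ), half_ofReal (by positivity),
    Real.sqrt_mul hb'.le, Real.sqrt_sq hq'.le]

theorem HL_one {b : Fin r → ℤ} (hb : ∀ i, 0 < b i) (d : Fin r → ℤ) (γ : ℝ) :
    HL b d 1 0 γ = (beta b : ℂ) * (1 - 2 * I * γ : ℂ) ^ (-(((r:ℝ)/2 : ℝ) : ℂ)) := by
  have h1 : ∀ i, gs (b i) (d i) 1 0 0 = 1 := by
    intro i; simp [gs]
  have e : (1 - 2 * I * γ : ℂ) ^ (-(((r:ℝ)/2 : ℝ) : ℂ)) = ∏ _i : Fin r, ((1 - 2 * I * γ : ℂ) ^ (1/2 : ℂ))⁻¹ := by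
    rw [Finset.prod_const, Finset.card_univ, Fintype.card_fin, cpow_neg, inv_pow, ← cpow_nat_mul]
    push_cast
    congr 3
    ring
  rw [e, HL, beta]
  push_cast
  rw [← Finset.prod_mul_distrib]
  refine Finset.prod_congr rfl fun i _ => ?_
  have h2 := denom_eq (hb i) 1 one_pos γ
  push_cast at h2
  rw [h1, h2, mul_one, one_div, mul_inv]

theorem HL_bound (hr : 5 ≤ r) {b : Fin r → ℤ} (hb : ∀ i, 0 < b i) (d : Fin r → ℤ) {q : ℕ} (hq : 0 < q)
    {a : ℤ} (ha : IsCoprime a (q:ℤ)) (hbq : ∀ i, IsCoprime (2 * b i) (q:ℤ)) (γ : ℝ) :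
    ‖HL b d q a γ‖ ≤ beta b * ((q:ℝ) ^ (-(5/2) : ℝ) * (1 + 4 * γ ^ 2) ^ (-(5/2) / 2 : ℝ)) := by
  have hq1 : (1:ℝ) ≤ q := by exact_mod_cast hq
  have hbe : 0 ≤ beta b := Finset.prod_nonneg fun i _ => by positivity
  rw [HL, norm_prod]
  have h1 : ∀ i ∈ Finset.univ, ‖gs (b i) (d i) q a 0 / (b i * (1 - 2 * I * γ) * q ^ 2) ^ (1 / 2 : ℂ)‖ ≤
      (√(b i : ℝ))⁻¹ * ((q:ℝ) ^ (-(1/2) : ℝ) * (1 + 4 * γ ^ 2) ^ (-(1/4) : ℝ)) := by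
    intro i _
    have hb' : (0:ℝ) < b i := by exact_mod_cast hb i
    have hn : ‖(1 - 2 * I * γ : ℂ) ^ (1/2 : ℂ)‖ = (1 + 4 * γ ^ 2) ^ (1/4 : ℝ) := by
      have := one_sub_cpow_norm γ (1/2)
      push_cast at this
      rw [this]; norm_num
    have hg : ‖gs (b i) (d i) q a 0‖ ≤ √q :=
      Real.le_sqrt_of_sq_le (gs_bound_coprime (d i) hq a 0 ha (hbq i))
    rw [norm_div, denom_eq (hb i) q hq, norm_mul, Complex.norm_real, Real.norm_of_nonneg (by positivity), hn,
      Real.rpow_neg (by positivity), Real.rpow_neg (by positivity), ← Real.sqrt_eq_rpow]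
    have hsq : √(q:ℝ) * √q = q := Real.mul_self_sqrt (by positivity)
    have hsb : 0 < √(b i : ℝ) := Real.sqrt_pos.mpr hb'
    have hs : 0 < √(q : ℝ) := Real.sqrt_pos.mpr (by linarith)
    have hg' : 0 < (1 + 4 * γ ^ 2) ^ (1 / 4 : ℝ) := by positivity
    calc _ ≤ √q / (√(b i : ℝ) * q * (1 + 4 * γ ^ 2) ^ (1 / 4 : ℝ)) := by gcongr
      _ = √q / (√(b i : ℝ) * (√q * √q) * (1 + 4 * γ ^ 2) ^ (1 / 4 : ℝ)) := by rw [hsq]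
      _ = _ := by field_simp
  refine (Finset.prod_le_prod (fun _ _ => norm_nonneg _) h1).trans ?_
  rw [Finset.prod_mul_distrib, Finset.prod_const, Finset.card_univ, Fintype.card_fin]
  change beta b * _ ≤ _
  gcongr
  have e1 : (q:ℝ) ^ (-(5/2) : ℝ) = ((q:ℝ) ^ (-(1/2) : ℝ)) ^ 5 := by
    rw [← Real.rpow_mul_natCast (by positivity)]; norm_num
  have e2 : (1 + 4 * γ ^ 2) ^ (-(5/2) / 2 : ℝ) = ((1 + 4 * γ ^ 2) ^ (-(1/4) : ℝ)) ^ 5 := by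
    rw [← Real.rpow_mul_natCast (by positivity)]; norm_num
  rw [e1, e2, ← mul_pow]
  refine pow_le_pow_of_le_one (by positivity) ?_ hr
  refine mul_le_one₀ ?_ (by positivity) ?_
  · exact Real.rpow_le_one_of_one_le_of_nonpos hq1 (by norm_num)
  · exact Real.rpow_le_one_of_one_le_of_nonpos (by nlinarith [sq_nonneg γ]) (by norm_num)

theorem tail_small {ε : ℝ} (hε : 0 < ε) : ∃ P : ℕ,
    ∑' q : ℕ, (if P ≤ q then (q:ℝ) ^ (-(3/2) : ℝ) else 0) < ε := by
  have h := tendsto_sum_nat_add (fun q : ℕ => (q:ℝ) ^ (-(3/2) : ℝ))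
  obtain ⟨P, hP⟩ := (h.eventually_lt_const hε).exists
  refine ⟨P, ?_⟩
  have hs : Summable fun q : ℕ => (if P ≤ q then (q:ℝ) ^ (-(3/2) : ℝ) else 0) := by
    refine sum_q.of_nonneg_of_le (fun q => by positivity) fun q => ?_
    split_ifs
    · rfl
    · positivity
  rw [← hs.sum_add_tsum_nat_add P, Finset.sum_eq_zero, zero_add]
  · refine lt_of_eq_of_lt ?_ hP
    congr 1
    funext k
    rw [if_pos (by omega)]
  · intro q hq
    rw [if_neg]
    rw [Finset.mem_range] at hq; omega

theorem thmM (hr : 5 ≤ r) (a : Fin r → ℤ) (ha : ∀ i, 0 < a i) (i0 : Fin r) :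
    ∃ L : ℤ, 0 < L ∧ ∃ c : ℝ, 0 < c ∧ ∃ n0 : ℕ, ∀ n : ℕ, n0 ≤ n →
      {t : Fin r → ℤ | t i0 + L * ∑ i, a i * t i ^ 2 = n}.Finite ∧
      c * (n:ℝ) ^ ((r:ℝ) / 2 - 1) ≤ {t : Fin r → ℤ | t i0 + L * ∑ i, a i * t i ^ 2 = n}.ncard := by
  have hr' : (5:ℝ) ≤ r := by exact_mod_cast hr
  obtain ⟨J, hJ0, hJ⟩ := J_int (s := (r:ℝ) / 2) (by linarith)
  have hK := KK_nonneg
  obtain ⟨P, hP⟩ := tail_small (ε := J / (2 * (3 * KK + 1))) (by positivity)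
  set L : ℤ := 2 * (∏ i, a i) * (P.factorial : ℤ) with hL
  have hL0 : 0 < L := by
    have : 0 < ∏ i, a i := Finset.prod_pos fun i _ => ha i
    have : 0 < (P.factorial : ℤ) := by exact_mod_cast P.factorial_pos
    positivity
  refine ⟨L, hL0, ?_⟩
  set b : Fin r → ℤ := fun i => L * a i with hb
  set d : Fin r → ℤ := fun i => if i = i0 then 1 else 0 with hd
  have hb0 : ∀ i, 0 < b i := fun i => mul_pos hL0 (ha i)
  have hd1 : ∀ i, d i ^ 2 ≤ 1 := by
    intro i; simp only [hd]; split_ifs <;> simp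
  have hbe : 0 < beta b := Finset.prod_pos fun i _ => by
    have : (0:ℝ) < b i := by exact_mod_cast hb0 i
    positivity
  have hset : ∀ n : ℕ, {t : Fin r → ℤ | t i0 + L * ∑ i, a i * t i ^ 2 = n} = sols b d n := by
    intro n
    ext t
    simp only [sols, Set.mem_ofPred_eq, hb, hd]
    rw [Finset.sum_add_distrib, Finset.mul_sum]
    simp [mul_assoc]
  -- bound on the limit error
  have hE : ∑' q, eL b d q ≤ beta b * (J / 2) := by
    have hle : ∀ q, eL b d q ≤ beta b * (3 * KK) * (if P ≤ q then (q:ℝ) ^ (-(3/2) : ℝ) else 0) := by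
      intro q
      have hnn : 0 ≤ beta b * (3 * KK) * (if P ≤ q then (q:ℝ) ^ (-(3/2) : ℝ) else 0) := by
        positivity
      unfold eL
      by_cases hq : 2 ≤ q
      · rw [if_pos hq]
        have hq0 : 0 < q := by omega
        by_cases hg : Int.gcd L q = 1
        · have hcop : IsCoprime L (q:ℤ) := Int.isCoprime_iff_gcd_eq_one.mpr hg
          have hPq : P ≤ q := by
            by_contra hc
            push Not at hc
            have h1 : (q:ℤ) ∣ (P.factorial : ℤ) := by
              exact_mod_cast Nat.dvd_factorial hq0 hc.le
            have h2 : (q:ℤ) ∣ L := h1.mul_left _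
            have h3 : (q:ℤ) ∣ (Int.gcd L q : ℤ) := Int.dvd_coe_gcd h2 (dvd_refl _)
            rw [hg] at h3
            have h4 : q ∣ 1 := by exact_mod_cast h3
            have := Nat.le_of_dvd one_pos h4
            omega
          have hbq : ∀ i, IsCoprime (2 * b i) (q:ℤ) := by
            intro i
            have h2 : (2:ℤ) ∣ L := ⟨(∏ i, a i) * (P.factorial : ℤ), by rw [hL]; ring⟩
            have ha' : a i ∣ L := by
              rw [hL]
              exact ((Finset.dvd_prod_of_mem a (Finset.mem_univ i)).mul_left 2).mul_right _
            exact (hcop.of_isCoprime_of_dvd_left h2).mul_left (hcop.mul_left (hcop.of_isCoprime_of_dvd_left ha'))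
          rw [if_pos hPq]
          calc ∑ a ∈ AS q, ∫ γ : ℝ, ‖HL b d q a γ‖ ≤ ∑ a ∈ AS q, beta b * ((q:ℝ) ^ (-(5/2) : ℝ) * KK) := by
                refine Finset.sum_le_sum fun a ha => ?_
                rw [KK, ← integral_const_mul, ← integral_const_mul]
                refine integral_mono_of_nonneg (Eventually.of_forall fun γ => norm_nonneg _)
                  ((br_int.const_mul _).const_mul _) (Eventually.of_forall fun γ => ?_)
                exact HL_bound hr hb0 d hq0 (mem_AS.mp ha).2 hbq γ
            _ = beta b * KK * ((AS q).card * (q:ℝ) ^ (-(5/2) : ℝ)) := by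
                rw [Finset.sum_const, nsmul_eq_mul]; ring
            _ ≤ beta b * KK * (3 * (q:ℝ) ^ (-(3/2) : ℝ)) := by
                exact mul_le_mul_of_nonneg_left (card_pow hq0) (by positivity)
            _ = _ := by ring
        · refine le_trans (le_of_eq ?_) hnn
          refine Finset.sum_eq_zero fun a' ha' => ?_
          have hz : ∀ γ, HL b d q a' γ = 0 := by
            intro γ
            refine Finset.prod_eq_zero (Finset.mem_univ i0) ?_
            have hgp : 0 < Int.gcd L q := Int.gcd_pos_of_ne_zero_left _ hL0.ne'
            have h1 : gs (b i0) (d i0) q a' 0 = 0 := by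
              have hd0 : d i0 = 1 := by simp [hd]
              rw [hd0]
              refine gs_zero hq0 (p := Int.gcd L q) (by omega) ?_ ?_ a' (mem_AS.mp ha').2
              · exact_mod_cast Int.gcd_dvd_right (a := L) (b := (q:ℤ))
              · exact (Int.gcd_dvd_left (a := L) (b := (q:ℤ))).mul_right _
            rw [h1, zero_div]
          simp [hz]
      · rw [if_neg hq]
        exact hnn
    have hs : Summable fun q : ℕ => (if P ≤ q then (q:ℝ) ^ (-(3/2) : ℝ) else 0) := by
      refine sum_q.of_nonneg_of_le (fun q => by positivity) fun q => ?_
      split_ifs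
      · rfl
      · positivity
    have hs2 := hs.mul_left (beta b * (3 * KK))
    have hs1 : Summable (eL b d) := by
      refine hs2.of_nonneg_of_le (fun q => ?_) hle
      unfold eL
      split_ifs
      · exact Finset.sum_nonneg fun a _ => integral_nonneg fun γ => norm_nonneg _
      · rfl
    calc _ ≤ ∑' q : ℕ, beta b * (3 * KK) * (if P ≤ q then (q:ℝ) ^ (-(3/2) : ℝ) else 0) :=
          hs1.tsum_le_tsum hle hs2
      _ = beta b * (3 * KK) * ∑' q : ℕ, (if P ≤ q then (q:ℝ) ^ (-(3/2) : ℝ) else 0) := tsum_mul_left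
      _ ≤ beta b * (3 * KK) * (J / (2 * (3 * KK + 1))) := by gcongr
      _ ≤ beta b * (J / 2) := by
          rw [mul_assoc]
          gcongr
          rw [mul_div_assoc', div_le_div_iff₀ (by positivity) (by norm_num)]
          nlinarith
  have hM : ∫ γ : ℝ, HL b d 1 0 γ * cexp (-(2 * Real.pi * I * γ)) = ((beta b * J : ℝ) : ℂ) := by
    simp_rw [HL_one hb0, mul_assoc (beta b : ℂ)]
    rw [integral_const_mul, hJ]
    push_cast
    ring
  have hlim := (main_lim hr hb0 hd1).norm.sub (err_lim hr hb0 hd1)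
  rw [hM, Complex.norm_real, Real.norm_of_nonneg (by positivity)] at hlim
  have hpos : beta b * J / 4 < beta b * J - ∑' q, eL b d q := by
    have : 0 < beta b * J := by positivity
    linarith
  have hev := hlim.eventually_const_lt hpos
  obtain ⟨C', hC0', hC'⟩ := eN_le hr hb0 hd1
  obtain ⟨n0, hn0⟩ := eventually_atTop.mp (hev.and (eventually_ge_atTop 4))
  refine ⟨beta b * J / 4, by positivity, n0, fun n hn => ?_⟩
  obtain ⟨h1, h4⟩ := hn0 n hn
  rw [hset]
  refine ⟨sols_finite hb0 hd1 n, ?_⟩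
  have hnp : 0 < n := by omega
  have hn' : (0:ℝ) < n := by exact_mod_cast hnp
  have h5 := core hb0 d h4
  have h6 : ∑ q ∈ Finset.Icc 2 (Nat.sqrt n), ∑ a ∈ AS q, ∫ γ : ℝ, ‖HN b d n q a γ‖ ≤ ∑' q, eN b d n q := by
    have hsum : Summable (eN b d n) :=
      (sum_q.mul_left C').of_nonneg_of_le (fun q => eN_nonneg _ _ _ _) (fun q => hC' n q hnp)
    refine le_trans (le_of_eq ?_) (hsum.sum_le_tsum (Finset.Icc 2 (Nat.sqrt n)) (fun q _ => eN_nonneg _ _ _ _))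
    refine Finset.sum_congr rfl fun q hq => ?_
    rw [Finset.mem_Icc] at hq
    rw [eN, if_pos hq.1]
  have h7 := count_ge hb0 hd1 hnp
  set Z := ∫ α in (-(1/2):ℝ)..(1/2), PP b d n α * cexp (-(2 * Real.pi * I * (α * n)))
  set M := ∫ γ : ℝ, HN b d n 1 0 γ * cexp (-(2 * Real.pi * I * γ))
  have hs : 0 < √(n:ℝ) := Real.sqrt_pos.mpr hn'
  have e3 : ‖(n:ℂ) / ((√n : ℝ) : ℂ) ^ r‖ = n / (√n) ^ r := by
    rw [norm_div, norm_pow, Complex.norm_real, Real.norm_of_nonneg hs.le, Complex.norm_natCast]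
  have h8 : ‖M‖ - ‖(n:ℂ) / ((√n : ℝ) : ℂ) ^ r * Z‖ ≤ ∑' q, eN b d n q := by
    have := norm_sub_norm_le M ((n:ℂ) / ((√n : ℝ) : ℂ) ^ r * Z)
    rw [norm_sub_rev] at this
    linarith
  rw [norm_mul, e3] at h8
  have h9 : beta b * J / 4 ≤ n / (√n) ^ r * (sols b d n).ncard := by
    have : n / (√n) ^ r * ‖Z‖ ≤ n / (√n) ^ r * (sols b d n).ncard := by gcongr
    linarith
  have e4 : (n:ℝ) ^ ((r:ℝ) / 2 - 1) = (√n) ^ r / n := by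
    rw [Real.rpow_sub hn', Real.rpow_one, Real.sqrt_eq_rpow, ← Real.rpow_mul_natCast hn'.le]
    congr 2
    ring
  rw [e4]
  calc _ ≤ (n / (√n) ^ r * (sols b d n).ncard) * ((√n) ^ r / n) := by gcongr
    _ = _ := by field_simp

end CM

end

section
open Complex Filter Topology MeasureTheory
namespace CM

lemma aeval_mul_hom {ι S : Type*} [CommRing S] (E : MvPolynomial ι ℤ) (d : ℕ)
    (hE : E.IsHomogeneous d) (T : S) (w : ι → S) :
    aeval (fun i => T * w i) E = T ^ d * aeval w E := by
  rw [aeval_def, aeval_def, eval₂_eq, eval₂_eq, Finset.mul_sum]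
  refine Finset.sum_congr rfl fun m hm => ?_
  have h1 : ∑ i ∈ m.support, m i = d := by
    have := hE (mem_support_iff.1 hm)
    rw [← this, Finsupp.weight_apply, Finsupp.sum]
    simp
  simp only [mul_pow]
  rw [Finset.prod_mul_distrib, Finset.prod_pow_eq_pow_sum, h1]
  ring

lemma eval_mul_hom {ι : Type*} (E : MvPolynomial ι ℤ) (d : ℕ)
    (hE : E.IsHomogeneous d) (T : ℤ) (w : ι → ℤ) :
    eval (fun i => T * w i) E = T ^ d * eval w E := by
  exact aeval_mul_hom E d hE T w

lemma eval_dvd {ι : Type*} (E : MvPolynomial ι ℤ) (W : ℤ) (x y : ι → ℤ)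
    (h : ∀ i, W ∣ x i - y i) : W ∣ eval x E - eval y E := by
  induction E using MvPolynomial.induction_on with
  | C a => simp
  | add p q hp hq =>
    have : eval x (p + q) - eval y (p + q) = (eval x p - eval y p) + (eval x q - eval y q) := by
      simp; ring
    rw [this]; exact dvd_add hp hq
  | mul_X p i hp =>
    have : eval x (p * X i) - eval y (p * X i)
        = (eval x p - eval y p) * x i + eval y p * (x i - y i) := by
      simp; ring
    rw [this]; exact dvd_add (hp.mul_right _) ((h i).mul_left _)

lemma aeval_cast {ι : Type*} (E : MvPolynomial ι ℤ) (x : ι → ℤ) :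
    aeval (fun i => (x i : ℝ)) E = ((eval x E : ℤ) : ℝ) := by
  induction E using MvPolynomial.induction_on with
  | C a => simp
  | add p q hp hq => simp [hp, hq]
  | mul_X p i hp => simp [hp]

lemma aeval_cont {ι : Type*} (E : MvPolynomial ι ℤ) :
    Continuous (fun x : ι → ℝ => aeval x E) := by
  induction E using MvPolynomial.induction_on with
  | C a => simp; exact continuous_const
  | add p q hp hq => simp only [map_add]; exact hp.add hq
  | mul_X p i hp => simp only [map_mul, aeval_X]; exact hp.mul (continuous_apply i)

def opt {κ S : Type*} (s : S) (z : κ → S) : Option κ → S := fun o => o.elim s z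

@[simp] lemma opt_none {κ S : Type*} (s : S) (z : κ → S) : opt s z none = s := rfl
@[simp] lemma opt_some {κ S : Type*} (s : S) (z : κ → S) (j : κ) : opt s z (some j) = z j := rfl

lemma sizeL {κ β : Type*} [Fintype κ] [Fintype β] (Q : β → MvPolynomial (Option κ) ℤ)
    (d : β → ℕ) (hQ : ∀ b, (Q b).IsHomogeneous (d b)) (z0 : κ → ℤ) (s T W : ℤ) (hW : 0 < W)
    (η : ℝ) (hη : 0 < η) :
    ∃ ε : ℝ, 0 < ε ∧ ε ≤ 1 ∧ ∃ P0 : ℕ, ∀ P : ℕ, P0 ≤ P → ∀ p : κ → ℤ,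
      (∀ j, |(p j : ℝ) - P * z0 j| ≤ ε * P) → ∀ b,
      |((eval (opt s (fun j => T * z0 j + W * p j)) (Q b) : ℤ) : ℝ)
        - ((W : ℝ) * P) ^ d b * ((eval (opt 0 z0) (Q b) : ℤ) : ℝ)| ≤ η * ((W : ℝ) * P) ^ d b := by
  set ζ0 : Option κ → ℝ := fun o => ((opt 0 z0 o : ℤ) : ℝ) with hζ0
  have hev : ∀ᶠ ζ in 𝓝 ζ0, ∀ b, |aeval ζ (Q b) - aeval ζ0 (Q b)| < η := by
    rw [eventually_all]
    intro b
    have := (aeval_cont (Q b)).tendsto ζ0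
    have := this (Metric.ball_mem_nhds _ hη)
    filter_upwards [this] with ζ hζ
    simpa [Real.dist_eq] using hζ
  obtain ⟨δ, hδ, hball⟩ := Metric.eventually_nhds_iff.1 hev
  have hW1 : (1 : ℝ) ≤ W := by exact_mod_cast hW
  set D : ℝ := |(s : ℝ)| + ∑ j, |(T * z0 j : ℝ)| with hD
  have hD0 : 0 ≤ D := by positivity
  refine ⟨min 1 (δ / 4), by positivity, min_le_left _ _, ⌈D / (δ / 4)⌉₊ + 1, ?_⟩
  intro P hP p hp b
  have hP1 : (1 : ℝ) ≤ P := by exact_mod_cast (by omega : 1 ≤ P)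
  have hDP : D ≤ δ / 4 * P := by
    have : D / (δ / 4) ≤ P := (Nat.le_ceil _).trans (by exact_mod_cast (by omega))
    rw [div_le_iff₀ (by positivity)] at this
    linarith
  set Y : ℝ := (W : ℝ) * P with hY
  have hYP : (P : ℝ) ≤ Y := by nlinarith
  have hY0 : 0 < Y := by linarith
  set z : κ → ℤ := fun j => T * z0 j + W * p j with hz
  set ζ : Option κ → ℝ := fun o => ((opt s z o : ℤ) : ℝ) / Y with hζ
  have e1 : (fun o => ((opt s z o : ℤ) : ℝ)) = fun o => Y * ζ o := by
    ext o; simp only [hζ]; field_simp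
  have e2 : ((eval (opt s z) (Q b) : ℤ) : ℝ) = Y ^ d b * aeval ζ (Q b) := by
    rw [← aeval_cast, e1, aeval_mul_hom _ _ (hQ b)]
  have e3 : ((eval (opt 0 z0) (Q b) : ℤ) : ℝ) = aeval ζ0 (Q b) := by
    rw [← aeval_cast]
  have hdist : dist ζ ζ0 < δ := by
    refine (dist_pi_le_iff (r := δ / 2) (by positivity)).2 ?_ |>.trans_lt (by linarith)
    rintro (_ | j)
    · simp only [hζ, hζ0, opt_none, Real.dist_eq, Int.cast_zero, sub_zero, abs_div, abs_of_pos hY0]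
      rw [div_le_iff₀ hY0]
      have : |(s : ℝ)| ≤ D := by
        have : 0 ≤ ∑ j, |(T * z0 j : ℝ)| := by positivity
        linarith
      nlinarith
    · simp only [hζ, hζ0, opt_some, Real.dist_eq]
      have hj : |(T * z0 j : ℝ)| ≤ D := by
        have : |(T * z0 j : ℝ)| ≤ ∑ j, |(T * z0 j : ℝ)| :=
          Finset.single_le_sum (f := fun j => |(T * z0 j : ℝ)|) (fun i _ => abs_nonneg _)
            (Finset.mem_univ j)
        have := abs_nonneg (s : ℝ)
        linarith
      have : ((z j : ℤ) : ℝ) / Y - z0 j = (T * z0 j + W * (p j - P * z0 j)) / Y := by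
        simp only [hz]; push_cast; rw [hY]; field_simp; ring
      rw [this, abs_div, abs_of_pos hY0, div_le_iff₀ hY0]
      refine (abs_add_le _ _).trans ?_
      rw [abs_mul (W : ℝ), abs_of_pos (by linarith : (0 : ℝ) < W)]
      have h5 := hp j
      have h6 : min 1 (δ / 4) * (P : ℝ) ≤ δ / 4 * P := by gcongr; exact min_le_right _ _
      have h7 : (W : ℝ) * |(p j : ℝ) - P * z0 j| ≤ W * (δ / 4 * P) := by gcongr; linarith
      have : (W : ℝ) * (δ / 4 * P) = δ / 4 * Y := by rw [hY]; ring
      nlinarith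
  have := (hball hdist b).le
  rw [e2, e3, ← mul_sub, abs_mul, abs_of_pos (by positivity), mul_comm η]
  gcongr

/-- arithmetic of the choice of parameters -/
lemma arithL {κ : Type*} {r : ℕ} (a : Fin r → ℤ) (ha : ∀ i, 0 < a i) (i0 : Fin r) (M : ℤ)
    (lam : Fin r → MvPolynomial (Option κ) ℤ) (hlam : ∀ i, (lam i).IsHomogeneous 1)
    (E : MvPolynomial (Option κ) ℤ) (hE : E.IsHomogeneous 3) (z0 : κ → ℤ) (g : ℤ)
    (hg : g = eval (opt 0 z0) E) (hM : 0 < M) :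
    ∃ T σ : ℤ, 0 < σ ∧ ∀ p : κ → ℤ, ∃ (ω : Fin r → ℤ) (e : ℤ),
      (∀ i, 2 * a i * ω i = eval (opt (-(g * σ)) (fun j => T * z0 j + (|g| * σ * M) * p j)) (lam i)) ∧
      (∀ i, M ∣ ω i) ∧
      eval (opt (-(g * σ)) (fun j => T * z0 j + (|g| * σ * M) * p j)) E = -(g * σ) * e ∧
      M ∣ e + a i0 := by
  set A : ℤ := ∏ i, a i with hA
  have hAd : ∀ i, a i ∣ A := fun i => Finset.dvd_prod_of_mem _ (Finset.mem_univ i)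
  choose A' hA' using hAd
  have hApos : 0 < A := Finset.prod_pos fun i _ => ha i
  have hA'pos : ∀ i, 0 < A' i := fun i => by
    have := hA' i; have := ha i; by_contra hc; nlinarith
  have hA'0 := hA'pos i0
  refine ⟨2 * A * M, (2 * A * M) ^ 2 * (2 * A' i0 * M), by positivity, ?_⟩
  intro p
  set T : ℤ := 2 * A * M with hT
  set σ : ℤ := T ^ 2 * (2 * A' i0 * M) with hσ
  have hσa : σ * a i0 = T ^ 3 := by
    rw [hσ]; have := hA' i0
    have : T = 2 * (a i0 * A' i0) * M := by rw [hT, this]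
    calc _ = T ^ 2 * (2 * (a i0 * A' i0) * M) := by ring
      _ = _ := by rw [← this]; ring
  set s' : ℤ := -(g * (T * (2 * A' i0 * M))) with hs'
  set z' : κ → ℤ := fun j => z0 j + (|g| * (T * (2 * A' i0 * M)) * M) * p j with hz'
  have hw : opt (-(g * σ)) (fun j => T * z0 j + (|g| * σ * M) * p j)
      = fun o => T * opt s' z' o := by
    ext o; cases o
    · simp [hs', hσ]; ring
    · simp [hz', hσ]; ring
  have hw0 : opt 0 (fun j => T * z0 j + (|g| * σ * M) * p j)
      = fun o => T * opt 0 z' o := by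
    ext o; cases o
    · simp
    · simp [hz', hσ]; ring
  have hz00 : opt 0 (fun j => T * z0 j) = fun o => T * opt 0 z0 o := by
    ext o; cases o <;> simp
  obtain ⟨d1, hd1⟩ : s' ∣ eval (opt s' z') E - eval (opt 0 z') E := by
    apply eval_dvd
    rintro (_ | j) <;> simp
  obtain ⟨d2, hd2⟩ : (|g| * σ * M) ∣ eval (opt 0 (fun j => T * z0 j + (|g| * σ * M) * p j)) E
      - eval (opt 0 (fun j => T * z0 j)) E := by
    apply eval_dvd
    rintro (_ | j) <;> simp
  rw [hw0, hz00, eval_mul_hom _ _ hE, eval_mul_hom _ _ hE, ← hg] at hd2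
  obtain ⟨u, hu⟩ : ∃ u : ℤ, |g| = g * u := by
    exact (dvd_abs g g).2 dvd_rfl
  refine ⟨fun i => A' i * M * eval (opt s' z') (lam i), T ^ 2 * d1 - a i0 - u * M * d2, ?_, ?_, ?_, ?_⟩
  · intro i
    rw [hw, eval_mul_hom _ _ (hlam i)]
    calc _ = 2 * (a i * A' i) * M * eval (opt s' z') (lam i) := by ring
      _ = _ := by rw [← hA' i, hT]; ring
  · intro i
    exact ⟨A' i * eval (opt s' z') (lam i), by ring⟩
  · rw [hw, eval_mul_hom _ _ hE]
    have h1 : T * s' = -(g * σ) := by rw [hs', hσ]; ring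
    calc T ^ 3 * eval (opt s' z') E = T ^ 3 * (s' * d1) + (T ^ 3 * eval (opt 0 z') E - T ^ 3 * g)
          + T ^ 3 * g := by rw [← hd1]; ring
      _ = (T * s') * T ^ 2 * d1 + (g * u) * σ * M * d2 + (σ * a i0) * g := by
          rw [hd2, hσa, hu]; ring
      _ = _ := by rw [h1]; ring
  · exact ⟨T * (2 * A) * d1 - u * d2, by rw [hT]; ring⟩

end CM

end

section
open Complex Filter Topology MeasureTheory
namespace CM

set_option maxHeartbeats 1600000 in
lemma thmR {κ : Type*} [Fintype κ] [DecidableEq κ] {r : ℕ} (hr : 5 ≤ r) (a : Fin r → ℤ)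
    (ha : ∀ i, 0 < a i)
    (lam : Fin r → MvPolynomial (Option κ) ℤ) (hlam : ∀ i, (lam i).IsHomogeneous 1)
    (E : MvPolynomial (Option κ) ℤ) (hE : E.IsHomogeneous 3) (z0 : κ → ℤ)
    (hg : eval (opt 0 z0) E ≠ 0) :
    ∃ c : ℝ, 0 < c ∧ ∃ C : ℝ, 0 < C ∧ ∃ s : ℤ, ∃ P0 : ℕ, ∀ P : ℕ, P0 ≤ P →
      ∃ A : Finset ((Fin r → ℤ) × (κ → ℤ)),
        c * (P : ℝ) ^ (Fintype.card κ) * ((P : ℝ) ^ 3) ^ ((r : ℝ) / 2 - 1) ≤ A.card ∧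
        ∀ v ∈ A, (∀ i, ((v.1 i : ℝ)) ^ 2 ≤ C * (P : ℝ) ^ 3) ∧ (∀ j, |(v.2 j : ℝ)| ≤ C * P) ∧
          s * (∑ i, a i * v.1 i ^ 2 + ∑ i, v.1 i * eval (opt s v.2) (lam i))
            + eval (opt s v.2) E = 0 := by
  classical
  set i0 : Fin r := ⟨0, by omega⟩ with hi0
  obtain ⟨L, hL, c0, hc0, n0, hM0⟩ := thmM hr a ha i0
  set a1 := a i0 with ha1
  have ha1p : 0 < a1 := ha i0
  set M : ℤ := 4 * a1 ^ 2 * L with hM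
  have hMp : 0 < M := by positivity
  set K : ℤ := 2 * a1 * L with hK
  have hKp : 0 < K := by positivity
  set g : ℤ := eval (opt 0 z0) E with hgd
  obtain ⟨T, σ, hσ, har⟩ := arithL a ha i0 M lam hlam E hE z0 g hgd hMp
  set s : ℤ := -(g * σ) with hs
  set W : ℤ := |g| * σ * M with hW
  have hgp : 0 < |g| := abs_pos.2 hg
  have hWp : 0 < W := by positivity
  have hW1 : (1 : ℝ) ≤ W := by exact_mod_cast hWp
  have hσ1 : (1 : ℝ) ≤ σ := by exact_mod_cast hσ
  have hM1 : (1 : ℝ) ≤ M := by exact_mod_cast hMp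
  obtain ⟨ε, hε, hε1, P1, hsize⟩ := sizeL
    (fun b : Option (Fin r) => b.elim E lam) (fun b => b.elim 3 (fun _ => 1))
    (by rintro (_ | b); exacts [hE, hlam b]) z0 s T W hWp (1 / 4) (by norm_num)
  set Λ : ℝ := 1 + ∑ i, |((eval (opt 0 z0) (lam i) : ℤ) : ℝ)| with hΛ
  have hΛ1 : 1 ≤ Λ := by
    have : 0 ≤ ∑ i, |((eval (opt 0 z0) (lam i) : ℤ) : ℝ)| := by positivity
    linarith
  set S : ℝ := ∑ i, (a i : ℝ) with hS
  have hS0 : 0 ≤ S := Finset.sum_nonneg fun i _ => by exact_mod_cast (ha i).le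
  set c2 : ℝ := 1 / (4 * σ * M) with hc2
  have hc2p : 0 < c2 := by positivity
  set C1 : ℝ := 2 * (2 + S * Λ ^ 2) * W ^ 3 + 2 * Λ ^ 2 * W ^ 3 with hC1
  set Z : ℝ := ∑ j, (|(T * z0 j : ℝ)| + W * (|(z0 j : ℝ)| + 1)) with hZ
  have hZ0 : 0 ≤ Z := by positivity
  refine ⟨ε ^ (Fintype.card κ) * (c0 * c2 ^ ((r : ℝ) / 2 - 1)), by positivity, C1 + Z,
    by positivity, s, P1 + 1 + ⌈(n0 : ℝ) / c2⌉₊ + ⌈4 * σ * (a1 : ℝ)⌉₊, ?_⟩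
  intro P hP
  have hP1 : (1 : ℝ) ≤ P := by exact_mod_cast (by omega : 1 ≤ P)
  have hPn : (n0 : ℝ) / c2 ≤ P := (Nat.le_ceil _).trans (Nat.cast_le.2 (by omega))
  have hPa : 4 * σ * (a1 : ℝ) ≤ P := (Nat.le_ceil _).trans (Nat.cast_le.2 (by omega))
  have hPP : (P : ℝ) ≤ (P : ℝ) ^ 3 := by
    calc (P : ℝ) = P ^ 1 := by ring
      _ ≤ _ := pow_le_pow_right₀ hP1 (by norm_num)
  set Y : ℝ := (W : ℝ) * P with hY
  have hYP : (P : ℝ) ≤ Y := by nlinarith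
  have hY1 : 1 ≤ Y := by linarith
  have hY23 : Y ^ 2 ≤ Y ^ 3 := pow_le_pow_right₀ hY1 (by norm_num)
  have hYP3 : (P : ℝ) ^ 3 ≤ Y ^ 3 := by gcongr
  -- the key construction for each p
  have key : ∀ p : κ → ℤ, (∀ j, |(p j : ℝ) - P * z0 j| ≤ ε * P) →
      ∃ D : Finset (Fin r → ℤ), c0 * c2 ^ ((r : ℝ) / 2 - 1) * ((P : ℝ) ^ 3) ^ ((r : ℝ) / 2 - 1)
        ≤ D.card ∧ ∀ ξ ∈ D, (∀ i, ((ξ i : ℝ)) ^ 2 ≤ C1 * (P : ℝ) ^ 3) ∧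
          s * (∑ i, a i * ξ i ^ 2
            + ∑ i, ξ i * eval (opt s (fun j => T * z0 j + W * p j)) (lam i))
            + eval (opt s (fun j => T * z0 j + W * p j)) E = 0 := by
    intro p hp
    obtain ⟨ω, e, hω, hMω, he, hMe⟩ := har p
    have hsz := hsize P (by omega) p hp
    -- bounds for ω
    have hωb : ∀ i, |(ω i : ℝ)| ≤ Λ * Y := by
      intro i
      have h1 := hsz (some i)
      simp only [Option.elim, pow_one] at h1
      rw [← hω i] at h1
      have h2 : |((eval (opt 0 z0) (lam i) : ℤ) : ℝ)| ≤ Λ - 1 := by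
        rw [hΛ, add_sub_cancel_left]
        exact Finset.single_le_sum (f := fun i => |((eval (opt 0 z0) (lam i) : ℤ) : ℝ)|)
          (fun i _ => abs_nonneg _) (Finset.mem_univ i)
      have h3 : |(((2 * a i * ω i : ℤ)) : ℝ)| ≤ Λ * Y := by
        have h4 : |Y * ((eval (opt 0 z0) (lam i) : ℤ) : ℝ)| ≤ Y * (Λ - 1) := by
          rw [abs_mul, abs_of_pos (by linarith)]; gcongr
        have h5 := abs_sub_abs_le_abs_sub (((2 * a i * ω i : ℤ)) : ℝ)
          (Y * ((eval (opt 0 z0) (lam i) : ℤ) : ℝ))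
        nlinarith
      refine le_trans ?_ h3
      have h6 : |ω i| ≤ |2 * a i * ω i| := by
        rw [abs_mul]
        have : 1 ≤ |2 * a i| := by
          have := ha i
          rw [abs_of_pos (by positivity)]; omega
        nlinarith [abs_nonneg (ω i)]
      exact_mod_cast h6
    -- bounds for e
    have hEb := hsz none
    simp only [Option.elim] at hEb
    rw [he, ← hgd] at hEb
    have heb : |(σ : ℝ) * (-e) - Y ^ 3| ≤ 1 / 4 * Y ^ 3 := by
      have h1 : (((-(g * σ) * e : ℤ)) : ℝ) - Y ^ 3 * g = g * (σ * (-e) - Y ^ 3) := by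
        push_cast; ring
      rw [h1, abs_mul] at hEb
      have h2 : (1 : ℝ) ≤ |(g : ℝ)| := by exact_mod_cast hgp
      nlinarith [abs_nonneg ((σ : ℝ) * (-e) - Y ^ 3)]
    rw [abs_le] at heb
    have hY3 : 0 < Y ^ 3 := by positivity
    set N : ℤ := ∑ i, a i * ω i ^ 2 - e with hN
    have hsum0 : (0 : ℝ) ≤ ∑ i, (a i : ℝ) * (ω i : ℝ) ^ 2 :=
      Finset.sum_nonneg fun i _ => mul_nonneg (by exact_mod_cast (ha i).le) (sq_nonneg _)
    have hωsq : ∀ i, (ω i : ℝ) ^ 2 ≤ Λ ^ 2 * Y ^ 2 := by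
      intro i
      rw [← sq_abs, ← mul_pow]
      exact pow_le_pow_left₀ (abs_nonneg _) (hωb i) 2
    have hsum1 : ∑ i, (a i : ℝ) * (ω i : ℝ) ^ 2 ≤ S * Λ ^ 2 * Y ^ 2 := by
      rw [hS, Finset.sum_mul, Finset.sum_mul]
      refine Finset.sum_le_sum fun i _ => ?_
      rw [mul_assoc]
      exact mul_le_mul_of_nonneg_left (hωsq i) (by exact_mod_cast (ha i).le)
    have hNr : (N : ℝ) = ∑ i, (a i : ℝ) * (ω i : ℝ) ^ 2 - e := by rw [hN]; push_cast; rfl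
    have hNlow : Y ^ 3 / (2 * σ) ≤ N := by
      rw [div_le_iff₀ (by positivity)]
      have h1 : (-e : ℝ) ≤ N := by linarith
      have h2 : (σ : ℝ) * (-e) ≤ σ * N := mul_le_mul_of_nonneg_left h1 (by linarith)
      linarith
    have hNup : (N : ℝ) ≤ (2 + S * Λ ^ 2) * Y ^ 3 := by
      have h1 : (-e : ℝ) ≤ 2 * Y ^ 3 := by
        by_contra hc
        push Not at hc
        have h3 : 1 * (2 * Y ^ 3) ≤ (σ : ℝ) * (-e) :=
          mul_le_mul hσ1 hc.le (by positivity) (by linarith)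
        linarith
      have h2 : S * Λ ^ 2 * Y ^ 2 ≤ S * Λ ^ 2 * Y ^ 3 := by gcongr
      rw [add_mul]
      linarith
    obtain ⟨k, hk⟩ : M ∣ N - a1 := by
      have h1 : M ∣ ∑ i, a i * ω i ^ 2 :=
        Finset.dvd_sum fun i _ => ((hMω i).pow (by norm_num : (2 : ℕ) ≠ 0)).mul_left _ |> fun h => h
      have : N - a1 = ∑ i, a i * ω i ^ 2 - (e + a1) := by rw [hN]; ring
      rw [this]
      exact dvd_sub h1 hMe
    have hkr : (M : ℝ) * k = N - a1 := by exact_mod_cast hk.symm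
    have hklow : c2 * Y ^ 3 ≤ k := by
      have h1 : (a1 : ℝ) ≤ Y ^ 3 / (4 * σ) := by
        rw [le_div_iff₀ (by positivity)]
        nlinarith
      have h2 : Y ^ 3 / (4 * σ) ≤ M * k := by
        rw [hkr]
        have : Y ^ 3 / (2 * σ) = 2 * (Y ^ 3 / (4 * σ)) := by field_simp; ring
        linarith
      have h3 : c2 * Y ^ 3 = Y ^ 3 / (4 * σ) / M := by rw [hc2]; field_simp
      rw [h3, div_le_iff₀ (by positivity)]
      linarith
    have hkP : c2 * (P : ℝ) ^ 3 ≤ k := le_trans (by gcongr) hklow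
    have hk0 : 0 ≤ k := by
      have : (0 : ℝ) ≤ k := le_trans (by positivity) hkP
      exact_mod_cast this
    obtain ⟨n, rfl⟩ := Int.eq_ofNat_of_zero_le hk0
    have hn0 : n0 ≤ n := by
      have h1 : (n0 : ℝ) ≤ c2 * P ^ 3 := by
        rw [div_le_iff₀ hc2p] at hPn
        nlinarith
      have : (n0 : ℝ) ≤ n := by push_cast at hkP; linarith
      exact_mod_cast this
    obtain ⟨hfin, hcard⟩ := hM0 n hn0
    set f : (Fin r → ℤ) → (Fin r → ℤ) := fun t i => (if i = i0 then 1 else 0) + K * t i - ω i with hf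
    have hfinj : Function.Injective f := by
      intro t t' htt
      ext i
      have := congrFun htt i
      simp only [hf] at this
      have h1 : K * t i = K * t' i := by linarith
      exact mul_left_cancel₀ hKp.ne' h1
    refine ⟨hfin.toFinset.image f, ?_, ?_⟩
    · rw [Finset.card_image_of_injective _ hfinj, ← Set.ncard_eq_toFinset_card _ hfin]
      refine le_trans ?_ hcard
      rw [mul_assoc, ← Real.mul_rpow (by positivity) (by positivity)]
      have hexp : 0 ≤ (r : ℝ) / 2 - 1 := by
        have : (5 : ℝ) ≤ r := by exact_mod_cast hr
        linarith
      have : c2 * (P : ℝ) ^ 3 ≤ n := by push_cast at hkP; exact hkP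
      gcongr
    · intro ξ hξ
      obtain ⟨t, ht, rfl⟩ := Finset.mem_image.1 hξ
      rw [Set.Finite.mem_toFinset, Set.mem_ofPred_eq] at ht
      have hsumN : ∑ i, a i * (f t i + ω i) ^ 2 = N := by
        have h1 : ∀ i, a i * (f t i + ω i) ^ 2
            = (if i = i0 then a i + 2 * a i * K * t i else 0) + K ^ 2 * (a i * t i ^ 2) := by
          intro i
          simp only [hf]
          split_ifs <;> ring
        rw [Finset.sum_congr rfl fun i _ => h1 i, Finset.sum_add_distrib, ← Finset.mul_sum]
        simp only [Finset.sum_ite_eq', Finset.mem_univ, if_true]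
        have h2 : N = a1 + M * n := by linarith
        rw [h2, ← ht, ← ha1, hK, hM]
        ring
      refine ⟨?_, ?_⟩
      · intro i
        have h1 : (f t i + ω i) ^ 2 ≤ N := by
          rw [← hsumN]
          have h2 : a i * (f t i + ω i) ^ 2 ≤ ∑ i, a i * (f t i + ω i) ^ 2 :=
            Finset.single_le_sum (f := fun i => a i * (f t i + ω i) ^ 2)
              (fun i _ => mul_nonneg (ha i).le (sq_nonneg _)) (Finset.mem_univ i)
          have := ha i
          nlinarith [sq_nonneg (f t i + ω i)]
        have h1r : ((f t i : ℝ) + ω i) ^ 2 ≤ N := by exact_mod_cast h1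
        have h2 : (f t i : ℝ) ^ 2 ≤ 2 * N + 2 * (ω i : ℝ) ^ 2 := by
          nlinarith [sq_nonneg ((f t i : ℝ) + 2 * ω i)]
        have h3 := hωsq i
        have h4 : Λ ^ 2 * Y ^ 2 ≤ Λ ^ 2 * Y ^ 3 := by gcongr
        have h5 : C1 * (P : ℝ) ^ 3 = 2 * ((2 + S * Λ ^ 2) * Y ^ 3) + 2 * (Λ ^ 2 * Y ^ 3) := by
          rw [hC1, hY]; ring
        rw [h5]; linarith
      · rw [he]
        have h1 : ∑ i, f t i * eval (opt s (fun j => T * z0 j + W * p j)) (lam i)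
            = ∑ i, f t i * (2 * a i * ω i) := Finset.sum_congr rfl fun i _ => by rw [hω i]
        rw [h1]
        have h2 : ∑ i, a i * f t i ^ 2 + ∑ i, f t i * (2 * a i * ω i)
            = ∑ i, a i * (f t i + ω i) ^ 2 - ∑ i, a i * ω i ^ 2 := by
          rw [← Finset.sum_add_distrib, ← Finset.sum_sub_distrib]
          exact Finset.sum_congr rfl fun i _ => by ring
        rw [h2, hsumN, hN]
        ring
  choose! D hD1 hD2 using key
  set Sp : Finset (κ → ℤ) := Fintype.piFinset
    (fun j => Finset.Icc ((P : ℤ) * z0 j) ((P : ℤ) * z0 j + ⌊ε * P⌋)) with hSp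
  have hfl : 0 ≤ ⌊ε * (P : ℝ)⌋ := Int.floor_nonneg.2 (by positivity)
  have hSpm : ∀ p ∈ Sp, ∀ j, |(p j : ℝ) - P * z0 j| ≤ ε * P := by
    intro p hp j
    have h1 := Finset.mem_Icc.1 (Fintype.mem_piFinset.1 hp j)
    have h2 : (P : ℝ) * z0 j ≤ p j := by exact_mod_cast h1.1
    have h3 : (p j : ℝ) ≤ P * z0 j + (⌊ε * (P : ℝ)⌋ : ℤ) := by exact_mod_cast h1.2
    have h4 := Int.floor_le (ε * (P : ℝ))
    rw [abs_of_nonneg (by linarith)]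
    linarith
  have hSpc : (ε * P) ^ (Fintype.card κ) ≤ (Sp.card : ℝ) := by
    rw [hSp, Fintype.card_piFinset]
    simp only [Int.card_Icc]
    have : ∀ j, ((P : ℤ) * z0 j + ⌊ε * (P : ℝ)⌋ + 1 - (P : ℤ) * z0 j) = ⌊ε * (P : ℝ)⌋ + 1 := by
      intro j; ring
    simp only [this, Finset.prod_const, Finset.card_univ]
    push_cast
    gcongr
    have h1 : (((⌊ε * (P : ℝ)⌋ + 1).toNat : ℤ) : ℝ) = ((⌊ε * (P : ℝ)⌋ + 1 : ℤ) : ℝ) := by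
      rw [Int.toNat_of_nonneg (by omega)]
    rw [Int.cast_natCast] at h1
    rw [h1]; push_cast
    exact (Int.lt_floor_add_one _).le
  set φ : (Σ _ : κ → ℤ, (Fin r → ℤ)) → (Fin r → ℤ) × (κ → ℤ) :=
    fun x => (x.2, fun j => T * z0 j + W * x.1 j) with hφ
  have hφinj : Function.Injective φ := by
    rintro ⟨p, ξ⟩ ⟨p', ξ'⟩ h
    simp only [hφ, Prod.mk.injEq] at h
    obtain ⟨h1, h2⟩ := h
    have : p = p' := by
      ext j
      have := congrFun h2 j
      have h3 : W * p j = W * p' j := by linarith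
      exact mul_left_cancel₀ hWp.ne' h3
    subst this; subst h1; rfl
  refine ⟨(Sp.sigma D).image φ, ?_, ?_⟩
  · rw [Finset.card_image_of_injective _ hφinj, Finset.card_sigma]
    push_cast
    have h1 : ∑ p ∈ Sp, (c0 * c2 ^ ((r : ℝ) / 2 - 1) * ((P : ℝ) ^ 3) ^ ((r : ℝ) / 2 - 1))
        ≤ ∑ p ∈ Sp, ((D p).card : ℝ) := Finset.sum_le_sum fun p hp => hD1 p (hSpm p hp)
    refine le_trans ?_ h1
    rw [Finset.sum_const, nsmul_eq_mul]
    calc _ = (ε * P) ^ (Fintype.card κ) *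
          (c0 * c2 ^ ((r : ℝ) / 2 - 1) * ((P : ℝ) ^ 3) ^ ((r : ℝ) / 2 - 1)) := by
          rw [mul_pow]; ring
      _ ≤ _ := by gcongr
  · intro v hv
    obtain ⟨⟨p, ξ⟩, hx, rfl⟩ := Finset.mem_image.1 hv
    rw [Finset.mem_sigma] at hx
    obtain ⟨hp, hξ⟩ := hx
    obtain ⟨h1, h2⟩ := hD2 p (hSpm p hp) ξ hξ
    refine ⟨fun i => (h1 i).trans ?_, ?_, h2⟩
    · gcongr; linarith
    · intro j
      have h3 := hSpm p hp j
      have h4 : |(p j : ℝ)| ≤ (|(z0 j : ℝ)| + 1) * P := by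
        have := abs_sub_abs_le_abs_sub (p j : ℝ) (P * z0 j)
        rw [abs_mul, abs_of_nonneg (by positivity : (0 : ℝ) ≤ P)] at this
        nlinarith
      have h5 : |(T * z0 j : ℝ)| + W * (|(z0 j : ℝ)| + 1) ≤ Z :=
        Finset.single_le_sum (f := fun j => |(T * z0 j : ℝ)| + W * (|(z0 j : ℝ)| + 1))
          (fun i _ => by positivity) (Finset.mem_univ j)
      have hC10 : 0 ≤ C1 := by positivity
      simp only [hφ]
      push_cast
      calc |(T : ℝ) * z0 j + W * p j| ≤ |(T * z0 j : ℝ)| + W * |(p j : ℝ)| := by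
            refine (abs_add_le _ _).trans ?_
            rw [abs_mul (W : ℝ), abs_of_pos (by linarith : (0 : ℝ) < W)]
        _ ≤ |(T * z0 j : ℝ)| * P + W * ((|(z0 j : ℝ)| + 1) * P) := by
            gcongr
            exact le_mul_of_one_le_right (abs_nonneg _) hP1
        _ = (|(T * z0 j : ℝ)| + W * (|(z0 j : ℝ)| + 1)) * P := by ring
        _ ≤ (C1 + Z) * P := mul_le_mul_of_nonneg_right (by linarith) (by positivity)

end CM

end

section
open Complex Filter Topology MeasureTheory
namespace CM

lemma deg_two {ι : Type*} (m : ι →₀ ℕ) (h : m.sum (fun _ e => e) = 2) :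
    ∃ i j, m = Finsupp.single i 1 + Finsupp.single j 1 := by
  classical
  have h1 : Multiset.card (Finsupp.toMultiset m) = 2 := by
    rw [Finsupp.card_toMultiset]; exact h
  obtain ⟨i, j, hij⟩ := Multiset.card_eq_two.1 h1
  refine ⟨i, j, ?_⟩
  rw [← Finsupp.toMultiset_toFinsupp m, hij]
  have : ({i, j} : Multiset ι) = {i} + {j} := rfl
  rw [this, map_add]
  simp

lemma quad_repr {ι : Type} (F : MvPolynomial ι ℤ) (hF : F.IsHomogeneous 2) :
    ∃ (β : Type) (_ : Fintype β) (c : β → ℤ) (i j : β → ι),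
      ∀ x : ι → ℤ, eval x F = ∑ b, c b * (x (i b) * x (j b)) := by
  classical
  have h : ∀ m : F.support, ∃ i j, (m : ι →₀ ℕ) = Finsupp.single i 1 + Finsupp.single j 1 := by
    intro m
    apply deg_two
    have := hF (mem_support_iff.1 m.2)
    rw [← this, Finsupp.weight_apply]
    simp
  choose i j hij using h
  refine ⟨F.support, inferInstance, fun m => coeff m.1 F, i, j, fun x => ?_⟩
  have h2 : eval x F = eval x (∑ m ∈ F.support, monomial m (coeff m F)) := by
    rw [support_sum_monomial_coeff]
  rw [h2, map_sum, ← Finset.sum_coe_sort]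
  refine Finset.sum_congr rfl fun m _ => ?_
  rw [eval_monomial]
  congr 1
  conv_lhs => rw [hij m]
  rw [Finsupp.prod_add_index' (by simp) (by intros; rw [pow_add])]
  simp

def bil {ι β R : Type*} [Fintype β] [CommRing R] (c : β → R) (i j : β → ι) :
    LinearMap.BilinForm R (ι → R) :=
  LinearMap.mk₂ R (fun x y => ∑ b, c b * (x (i b) * y (j b) + y (i b) * x (j b)))
    (by intro x x' y; rw [← Finset.sum_add_distrib]
        exact Finset.sum_congr rfl fun b _ => by simp only [Pi.add_apply]; ring)
    (by intro t x y; rw [smul_eq_mul, Finset.mul_sum]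
        exact Finset.sum_congr rfl fun b _ => by simp only [Pi.smul_apply, smul_eq_mul]; ring)
    (by intro x y y'; rw [← Finset.sum_add_distrib]
        exact Finset.sum_congr rfl fun b _ => by simp only [Pi.add_apply]; ring)
    (by intro t x y; rw [smul_eq_mul, Finset.mul_sum]
        exact Finset.sum_congr rfl fun b _ => by simp only [Pi.smul_apply, smul_eq_mul]; ring)

lemma bil_apply {ι β R : Type*} [Fintype β] [CommRing R] (c : β → R) (i j : β → ι) (x y : ι → R) :
    bil c i j x y = ∑ b, c b * (x (i b) * y (j b) + y (i b) * x (j b)) := rfl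

lemma orth {r : ℕ} (F : MvPolynomial (Fin r) ℤ) (hF : F.IsHomogeneous 2)
    (hFpos : ∀ v : Fin r → ℝ, v ≠ 0 → 0 < aeval v F) :
    ∃ (w : Fin r → Fin r → ℤ) (a : Fin r → ℤ), (∀ i, 0 < a i) ∧
      ∀ ξ : Fin r → ℤ, eval (∑ k, ξ k • w k) F = ∑ k, a k * ξ k ^ 2 := by
  classical
  obtain ⟨β, _, c, i, j, hrep⟩ := quad_repr F hF
  have hsymm : LinearMap.IsSymm (bil (fun b => (c b : ℚ)) i j) := by
    refine ⟨fun x y => ?_⟩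
    simp only [bil_apply, RingHom.id_apply]
    exact Finset.sum_congr rfl fun b _ => by ring
  obtain ⟨v0, hv0⟩ := LinearMap.BilinForm.exists_orthogonal_basis hsymm
  have hfr : Module.finrank ℚ (Fin r → ℚ) = r := by simp
  set v := v0.reindex (finCongr hfr) with hv
  have hvo : ∀ k l, k ≠ l → bil (fun b => (c b : ℚ)) i j (v k) (v l) = 0 := by
    intro k l hkl
    simp only [hv, Module.Basis.reindex_apply]
    exact hv0 (fun h => hkl ((finCongr hfr).symm.injective h))
  set D : ℕ := ∏ k, ∏ l, (v k l).den with hD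
  have hDp : 0 < D := Finset.prod_pos fun k _ => Finset.prod_pos fun l _ => (v k l).den_pos
  have hintg : ∀ k l, ∃ z : ℤ, (z : ℚ) = D * v k l := by
    intro k l
    have h1 : (v k l).den ∣ D :=
      (Finset.dvd_prod_of_mem (fun l => (v k l).den) (Finset.mem_univ l)).trans
        (Finset.dvd_prod_of_mem (fun k => ∏ l, (v k l).den) (Finset.mem_univ k))
    obtain ⟨e, he⟩ := h1
    refine ⟨e * (v k l).num, ?_⟩
    rw [he]; push_cast
    have h2 := Rat.mul_den_eq_num (v k l)
    rw [← h2]; ring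
  choose w hw using hintg
  have hw' : ∀ k, (fun l => (w k l : ℚ)) = (D : ℚ) • v k := by
    intro k; ext l; simp [hw]
  have hcast : ∀ x y : Fin r → ℤ, ((bil c i j x y : ℤ) : ℚ)
      = bil (fun b => (c b : ℚ)) i j (fun l => (x l : ℚ)) (fun l => (y l : ℚ)) := by
    intro x y; simp [bil_apply]
  have hwo : ∀ k l, k ≠ l → bil c i j (w k) (w l) = 0 := by
    intro k l hkl
    have : ((bil c i j (w k) (w l) : ℤ) : ℚ) = 0 := by
      rw [hcast, hw', hw']
      simp [hvo k l hkl]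
    exact_mod_cast this
  have hdiag : ∀ x : Fin r → ℤ, bil c i j x x = 2 * eval x F := by
    intro x
    rw [hrep, bil_apply, Finset.mul_sum]
    exact Finset.sum_congr rfl fun b _ => by ring
  refine ⟨w, fun k => eval (w k) F, ?_, ?_⟩
  · intro k
    have hne : (fun l => (w k l : ℝ)) ≠ 0 := by
      intro h0
      have h1 : v k = 0 := by
        ext l
        have h2 : (w k l : ℝ) = 0 := congrFun h0 l
        have h3 : w k l = 0 := by exact_mod_cast h2
        have h4 := hw k l
        rw [h3] at h4
        have hD0 : (D : ℚ) ≠ 0 := by exact_mod_cast hDp.ne'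
        simp only [Int.cast_zero] at h4
        rcases mul_eq_zero.1 h4.symm with h | h
        · exact absurd h hD0
        · simpa using h
      exact v.ne_zero k h1
    have := hFpos _ hne
    rw [aeval_cast] at this
    exact_mod_cast this
  · intro ξ
    have h1 : 2 * eval (∑ k, ξ k • w k) F = 2 * ∑ k, eval (w k) F * ξ k ^ 2 := by
      rw [← hdiag]
      simp only [map_sum, map_smul, LinearMap.sum_apply, LinearMap.smul_apply, smul_eq_mul]
      rw [Finset.mul_sum]
      refine Finset.sum_congr rfl fun k _ => ?_
      rw [Finset.sum_eq_single k]
      · rw [hdiag]; ring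
      · intro l _ hl; rw [hwo _ _ hl]; ring
      · simp
    linarith

end CM

end

section
open Complex Filter Topology MeasureTheory
namespace CM

/-- the counted set -/
def cset {r m' h' : ℕ} (F : MvPolynomial (Fin r) ℤ)
    (q : Fin (r + m') → MvPolynomial (Fin (h' + 1)) ℤ) (R : MvPolynomial (Fin (h' + 1)) ℤ)
    (B : ℝ) : Set ((Fin (r + m') → ℤ) × (Fin (h' + 1) → ℤ)) :=
  {p | (∀ j, (|p.1 j| : ℝ) ≤ B) ∧ (∀ i, (|p.2 i| : ℝ) ≤ B) ∧
          p.2 0 * eval (fun i : Fin r => p.1 (Fin.castAdd m' i)) F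
            + ∑ j, p.1 j * eval p.2 (q j) + eval p.2 R = 0}

lemma cset_finite {r m' h' : ℕ} (F : MvPolynomial (Fin r) ℤ)
    (q : Fin (r + m') → MvPolynomial (Fin (h' + 1)) ℤ) (R : MvPolynomial (Fin (h' + 1)) ℤ)
    (B : ℝ) : (cset F q R B).Finite := by
  have hf : (Set.Icc (-⌊B⌋) ⌊B⌋).Finite := Set.finite_Icc _ _
  refine Set.Finite.subset ((Set.Finite.pi' (ι := Fin (r + m')) (fun _ => hf)).prod
    (Set.Finite.pi' (ι := Fin (h' + 1)) (fun _ => hf))) ?_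
  have key : ∀ z : ℤ, |(z : ℝ)| ≤ B → z ∈ Set.Icc (-⌊B⌋) ⌊B⌋ := by
    intro z hz
    have h1 : |z| ≤ ⌊B⌋ := Int.le_floor.2 (by exact_mod_cast hz)
    exact abs_le.1 h1
  rintro p ⟨h1, h2, -⟩
  exact ⟨fun j => key _ (h1 j), fun j => key _ (h2 j)⟩

noncomputable def ysub (m' h' : ℕ) : Fin (h' + 1) → MvPolynomial (Option (Fin m' ⊕ Fin h')) ℤ :=
  Fin.cons (X none) (fun i => X (some (Sum.inr i)))

def yv {m' h' : ℕ} (s : ℤ) (z : Fin m' ⊕ Fin h' → ℤ) : Fin (h' + 1) → ℤ :=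
  Fin.cons s (fun i => z (Sum.inr i))

lemma eval_sub {m' h' : ℕ} (s : ℤ) (z : Fin m' ⊕ Fin h' → ℤ) (Q : MvPolynomial (Fin (h' + 1)) ℤ) :
    eval (opt s z) (aeval (ysub m' h') Q) = eval (yv s z) Q := by
  induction Q using MvPolynomial.induction_on with
  | C a => simp
  | add p q hp hq => simp only [map_add, hp, hq]
  | mul_X p i hp =>
    simp only [map_mul, hp, aeval_X, eval_X]
    congr 1
    refine Fin.cases ?_ (fun i => ?_) i <;> simp [ysub, yv]

lemma sub_hom {m' h' d : ℕ} (Q : MvPolynomial (Fin (h' + 1)) ℤ) (hQ : Q.IsHomogeneous d) :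
    (aeval (ysub m' h') Q).IsHomogeneous d := by
  have := hQ.aeval (ysub m' h') (n := 1) (by
    intro i
    refine Fin.cases ?_ (fun i => ?_) i <;> simp [ysub, isHomogeneous_X])
  simpa using this

noncomputable def Epoly {r m' h' : ℕ}
    (q : Fin (r + m') → MvPolynomial (Fin (h' + 1)) ℤ) (R : MvPolynomial (Fin (h' + 1)) ℤ) :
    MvPolynomial (Option (Fin m' ⊕ Fin h')) ℤ :=
  ∑ j : Fin m', X (some (Sum.inl j)) * aeval (ysub m' h') (q (Fin.natAdd r j))
    + aeval (ysub m' h') R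

lemma Epoly_hom {r m' h' : ℕ}
    (q : Fin (r + m') → MvPolynomial (Fin (h' + 1)) ℤ) (R : MvPolynomial (Fin (h' + 1)) ℤ)
    (hq : ∀ j, (q j).IsHomogeneous 2) (hR : R.IsHomogeneous 3) :
    (Epoly q R).IsHomogeneous 3 := by
  refine IsHomogeneous.add (IsHomogeneous.sum _ _ _ fun j _ => ?_) (sub_hom _ hR)
  exact (isHomogeneous_X ℤ _).mul (sub_hom _ (hq _))

lemma div_hom {ι : Type*} (q l : MvPolynomial ι ℤ) (i : ι) (hq : q.IsHomogeneous 2)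
    (h : q = X i * l) : l.IsHomogeneous 1 := by
  intro d hd
  have h1 : coeff (Finsupp.single i 1 + d) q ≠ 0 := by
    rw [h, coeff_X_mul]; exact hd
  have h2 := hq h1
  rw [map_add, Finsupp.weight_single] at h2
  simp only [Pi.one_apply, smul_eq_mul, mul_one] at h2
  omega

lemma count_le {r m' h' : ℕ} (F : MvPolynomial (Fin r) ℤ)
    (q : Fin (r + m') → MvPolynomial (Fin (h' + 1)) ℤ) (R : MvPolynomial (Fin (h' + 1)) ℤ)
    (l : Fin r → MvPolynomial (Fin (h' + 1)) ℤ)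
    (hl : ∀ i, q (Fin.castAdd m' i) = X 0 * l i) (B : ℝ) (s : ℤ) (hs : |(s : ℝ)| ≤ B)
    (A : Finset ((Fin r → ℤ) × (Fin m' ⊕ Fin h' → ℤ)))
    (hA : ∀ v ∈ A, (∀ i, |(v.1 i : ℝ)| ≤ B) ∧ (∀ j, |(v.2 j : ℝ)| ≤ B) ∧
      s * (eval v.1 F + ∑ i, v.1 i * eval (yv s v.2) (l i)) + eval (opt s v.2) (Epoly q R) = 0) :
    A.card ≤ (cset F q R B).ncard := by
  classical
  set Φ : ((Fin r → ℤ) × (Fin m' ⊕ Fin h' → ℤ)) → (Fin (r + m') → ℤ) × (Fin (h' + 1) → ℤ) :=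
    fun v => (Fin.append v.1 (fun j => v.2 (Sum.inl j)), yv s v.2) with hΦ
  have hinj : Function.Injective Φ := by
    rintro ⟨u, z⟩ ⟨u', z'⟩ h
    simp only [hΦ, Prod.mk.injEq] at h
    obtain ⟨h1, h2⟩ := h
    have e1 : u = u' := by
      ext i; have := congrFun h1 (Fin.castAdd m' i); simpa using this
    have e2 : z = z' := by
      ext j
      rcases j with j | j
      · have := congrFun h1 (Fin.natAdd r j); simpa using this
      · have := congrFun h2 j.succ; simpa [yv] using this
    rw [e1, e2]
  rw [← Finset.card_image_of_injective A hinj, ← Set.ncard_coe_finset]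
  refine Set.ncard_le_ncard ?_ (cset_finite F q R B)
  intro p hp
  obtain ⟨v, hv, rfl⟩ := Finset.mem_image.1 (Finset.mem_coe.1 hp)
  obtain ⟨h1, h2, h3⟩ := hA v hv
  refine ⟨?_, ?_, ?_⟩
  · intro j
    refine Fin.addCases (fun i => ?_) (fun i => ?_) j
    · simpa [hΦ] using h1 i
    · simpa [hΦ] using h2 (Sum.inl i)
  · intro i
    refine Fin.cases ?_ (fun i => ?_) i
    · simpa [hΦ, yv] using hs
    · simpa [hΦ, yv] using h2 (Sum.inr i)
  · have e0 : yv s v.2 0 = s := by simp [yv]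
    simp only [hΦ, Fin.append_left, Fin.append_right, Fin.sum_univ_add, hl, map_mul, eval_X, e0]
    rw [← h3, Epoly, map_add, map_sum]
    simp only [map_mul, eval_X, eval_sub, opt_some]
    have : ∑ i, v.1 i * (s * eval (yv s v.2) (l i)) = s * ∑ i, v.1 i * eval (yv s v.2) (l i) := by
      rw [Finset.mul_sum]; exact Finset.sum_congr rfl fun i _ => by ring
    rw [this]; ring

lemma main1 {r m' h' : ℕ} (hr : 5 ≤ r) (F : MvPolynomial (Fin r) ℤ)
    (q : Fin (r + m') → MvPolynomial (Fin (h' + 1)) ℤ) (R : MvPolynomial (Fin (h' + 1)) ℤ)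
    (l : Fin r → MvPolynomial (Fin (h' + 1)) ℤ)
    (hl : ∀ i, q (Fin.castAdd m' i) = X 0 * l i)
    (hG : ∀ z, eval (opt 0 z) (Epoly q R) = 0) (B : ℝ) (hB : 1 ≤ B) :
    B ^ ((r : ℝ) - 2 + 2 / 3 * ((m' + h' : ℕ) : ℝ)) ≤ (cset F q R B).ncard := by
  classical
  set I : Finset ℤ := Finset.Icc 0 ⌊B⌋ with hI
  have hfl : 0 ≤ ⌊B⌋ := Int.floor_nonneg.2 (by linarith)
  have hIc : B ≤ (I.card : ℝ) := by
    rw [hI, Int.card_Icc, sub_zero]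
    have h1 : (((⌊B⌋ + 1).toNat : ℤ) : ℝ) = ((⌊B⌋ + 1 : ℤ) : ℝ) := by
      rw [Int.toNat_of_nonneg (by omega)]
    rw [Int.cast_natCast] at h1
    rw [h1]; push_cast
    exact (Int.lt_floor_add_one _).le
  have hIm : ∀ z ∈ I, |(z : ℝ)| ≤ B := by
    intro z hz
    obtain ⟨h1, h2⟩ := Finset.mem_Icc.1 hz
    rw [abs_of_nonneg (by exact_mod_cast h1)]
    exact Int.le_floor.1 h2
  have hc := count_le F q R l hl B 0 (by simp; linarith)
    ((Fintype.piFinset fun _ : Fin r => I) ×ˢ (Fintype.piFinset fun _ : Fin m' ⊕ Fin h' => I))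
    (by
      rintro ⟨u, z⟩ hv
      rw [Finset.mem_product, Fintype.mem_piFinset, Fintype.mem_piFinset] at hv
      exact ⟨fun i => hIm _ (hv.1 i), fun j => hIm _ (hv.2 j), by simp [hG]⟩)
  have hc' : B ^ (r + (m' + h')) ≤ ((cset F q R B).ncard : ℝ) := by
    refine le_trans ?_ (Nat.cast_le.2 hc)
    rw [Finset.card_product, Fintype.card_piFinset, Fintype.card_piFinset]
    simp only [Finset.prod_const, Finset.card_univ, Fintype.card_fin, Fintype.card_sum]
    push_cast
    rw [← pow_add]
    gcongr
  refine le_trans ?_ hc'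
  rw [← Real.rpow_natCast]
  apply Real.rpow_le_rpow_of_exponent_le hB
  push_cast
  have : (0 : ℝ) ≤ m' := by positivity
  have : (0 : ℝ) ≤ h' := by positivity
  linarith

lemma main2 {r m' h' : ℕ} (hr : 5 ≤ r) (F : MvPolynomial (Fin r) ℤ) (hF2 : F.IsHomogeneous 2)
    (hFpos : ∀ v : Fin r → ℝ, v ≠ 0 → 0 < aeval v F)
    (q : Fin (r + m') → MvPolynomial (Fin (h' + 1)) ℤ) (R : MvPolynomial (Fin (h' + 1)) ℤ)
    (hq : ∀ j, (q j).IsHomogeneous 2) (hR : R.IsHomogeneous 3)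
    (l : Fin r → MvPolynomial (Fin (h' + 1)) ℤ)
    (hl : ∀ i, q (Fin.castAdd m' i) = X 0 * l i)
    (z0 : Fin m' ⊕ Fin h' → ℤ) (hG : eval (opt 0 z0) (Epoly q R) ≠ 0) :
    ∃ c > (0 : ℝ), ∃ B₀ : ℝ, ∀ B : ℝ, B₀ ≤ B →
    c * B ^ ((r : ℝ) - 2 + 2 / 3 * ((m' + h' : ℕ) : ℝ)) ≤ (cset F q R B).ncard := by
  classical
  have hlh : ∀ i, (l i).IsHomogeneous 1 := fun i => div_hom _ _ _ (hq _) (hl i)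
  obtain ⟨w, a, ha, hwa⟩ := orth F hF2 hFpos
  obtain ⟨c, hc, C, hC, s, P0, hmain⟩ := thmR hr a ha
    (fun k => ∑ j, MvPolynomial.C (w k j) * aeval (ysub m' h') (l j))
    (fun k => IsHomogeneous.sum _ _ _ fun j _ => by
      have := (isHomogeneous_C (Option (Fin m' ⊕ Fin h')) (w k j)).mul
        (sub_hom (m' := m') _ (hlh j))
      simpa using this) (Epoly q R) (Epoly_hom q R hq hR) z0 hG
  set V : ℝ := 1 + ∑ j, ∑ k, |(w k j : ℝ)| with hV
  have hV1 : 1 ≤ V := by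
    have : 0 ≤ ∑ j, ∑ k, |(w k j : ℝ)| := by positivity
    linarith
  set C' : ℝ := C * V ^ 2 with hC'
  have hC'p : 0 < C' := by positivity
  set kap : ℝ := C' ^ (-(1 / 3) : ℝ) with hkap
  have hkapp : 0 < kap := by positivity
  have hκ3 : kap ^ 3 * C' = 1 := by
    rw [hkap, ← Real.rpow_natCast, ← Real.rpow_mul hC'p.le]
    norm_num
    rw [Real.rpow_neg_one]
    field_simp
  set e : ℝ := ((m' + h' : ℕ) : ℝ) + 3 * ((r : ℝ) / 2 - 1) with he
  have he0 : 0 ≤ e := by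
    have : (5 : ℝ) ≤ r := by exact_mod_cast hr
    have : (0 : ℝ) ≤ ((m' + h' : ℕ) : ℝ) := by positivity
    rw [he]; linarith
  have htend : Tendsto (fun B : ℝ => kap * B ^ (2 / 3 : ℝ)) atTop atTop :=
    (tendsto_rpow_atTop (by norm_num)).const_mul_atTop hkapp
  obtain ⟨B1, hB1⟩ := eventually_atTop.1 (htend.eventually_ge_atTop (P0 + 2 : ℝ))
  refine ⟨c * (kap / 2) ^ e, by positivity, max B1 (1 + |(s : ℝ)| + C ^ 3 * kap ^ 3), ?_⟩
  intro B hB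
  have hBB1 : B1 ≤ B := (le_max_left _ _).trans hB
  have hBs : 1 + |(s : ℝ)| + C ^ 3 * kap ^ 3 ≤ B := (le_max_right _ _).trans hB
  have hs0 := abs_nonneg (s : ℝ)
  have hck : 0 < C ^ 3 * kap ^ 3 := by positivity
  have hB0 : 1 ≤ B := by linarith
  set τ : ℝ := kap * B ^ (2 / 3 : ℝ) with hτ
  have hτP : (P0 : ℝ) + 2 ≤ τ := hB1 B hBB1
  have hτ3 : τ ^ 3 = kap ^ 3 * B ^ 2 := by
    rw [hτ, mul_pow]
    congr 1
    rw [← Real.rpow_natCast, ← Real.rpow_mul (by linarith)]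
    norm_num
  have hP0' : (0 : ℝ) ≤ P0 := by positivity
  set P : ℕ := ⌊τ⌋₊ with hP
  have hPτ : (P : ℝ) ≤ τ := Nat.floor_le (by linarith)
  have hτP1 : τ < P + 1 := Nat.lt_floor_add_one τ
  have hPP0 : P0 ≤ P := Nat.le_floor (by linarith)
  have hP2 : τ / 2 ≤ P := by linarith
  have hPpos : (0 : ℝ) < P := by linarith
  have hP3 : (P : ℝ) ^ 3 ≤ kap ^ 3 * B ^ 2 := by
    rw [← hτ3]; gcongr
  obtain ⟨A, hAc, hAm⟩ := hmain P hPP0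
  set ψ : ((Fin r → ℤ) × (Fin m' ⊕ Fin h' → ℤ)) → ((Fin r → ℤ) × (Fin m' ⊕ Fin h' → ℤ)) :=
    fun v => (∑ k, v.1 k • w k, v.2) with hψ
  have hlin : ∀ ξ : Fin r → ℤ, ∑ k, ξ k • w k = 0 → ξ = 0 := by
    intro ξ h
    have h1 := hwa ξ
    rw [h] at h1
    have h2 : eval (0 : Fin r → ℤ) F = 0 := by
      have := eval_mul_hom F 2 hF2 0 0
      have e0 : (fun i : Fin r => (0 : ℤ) * (0 : Fin r → ℤ) i) = 0 := by ext; simp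
      rw [e0] at this
      simpa using this
    rw [h2] at h1
    have h3 := (Finset.sum_eq_zero_iff_of_nonneg
      (fun k _ => mul_nonneg (ha k).le (sq_nonneg (ξ k)))).1 h1.symm
    ext k
    have := h3 k (Finset.mem_univ k)
    rcases mul_eq_zero.1 this with h | h
    · exact absurd h (ha k).ne'
    · simpa using h
  have hψinj : Function.Injective ψ := by
    rintro ⟨ξ, z⟩ ⟨ξ', z'⟩ h
    simp only [hψ, Prod.mk.injEq] at h
    obtain ⟨h1, rfl⟩ := h
    have h2 : ξ - ξ' = 0 := by
      apply hlin
      simp only [Pi.sub_apply, sub_smul, Finset.sum_sub_distrib, h1, sub_self]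
    rw [sub_eq_zero.1 h2]
  have hcount := count_le F q R l hl B s (by linarith) (A.image ψ) (by
    intro v' hv'
    obtain ⟨v, hv, rfl⟩ := Finset.mem_image.1 hv'
    obtain ⟨h1, h2, h3⟩ := hAm v hv
    refine ⟨?_, ?_, ?_⟩
    · intro j
      have hξ : ∀ k, |(v.1 k : ℝ)| ≤ B / V := by
        intro k
        apply abs_le_of_sq_le_sq _ (by positivity)
        refine (h1 k).trans ?_
        rw [div_pow, le_div_iff₀ (by positivity)]
        calc C * (P : ℝ) ^ 3 * V ^ 2 = (P : ℝ) ^ 3 * C' := by rw [hC']; ring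
          _ ≤ kap ^ 3 * B ^ 2 * C' := by gcongr
          _ = (kap ^ 3 * C') * B ^ 2 := by ring
          _ = B ^ 2 := by rw [hκ3, one_mul]
      have e1 : (((ψ v).1 j : ℤ) : ℝ) = ∑ k, (v.1 k : ℝ) * w k j := by
        simp [hψ, Finset.sum_apply]
      rw [e1]
      calc |∑ k, (v.1 k : ℝ) * w k j| ≤ ∑ k, |(v.1 k : ℝ) * w k j| :=
            Finset.abs_sum_le_sum_abs _ _
        _ ≤ ∑ k, B / V * |(w k j : ℝ)| := Finset.sum_le_sum fun k _ => by
            rw [abs_mul]; gcongr; exact hξ k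
        _ = B / V * ∑ k, |(w k j : ℝ)| := by rw [Finset.mul_sum]
        _ ≤ B / V * V := by
            gcongr
            have := Finset.single_le_sum (f := fun j => ∑ k, |(w k j : ℝ)|)
              (fun i _ => by positivity) (Finset.mem_univ j)
            rw [hV]; linarith
        _ = B := by field_simp
    · intro j
      refine (h2 j).trans ?_
      rw [← pow_le_pow_iff_left₀ (by positivity) (by linarith) (by norm_num : (3 : ℕ) ≠ 0), mul_pow]
      calc C ^ 3 * (P : ℝ) ^ 3 ≤ C ^ 3 * (kap ^ 3 * B ^ 2) := by gcongr
        _ = (C ^ 3 * kap ^ 3) * B ^ 2 := by ring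
        _ ≤ B * B ^ 2 := by gcongr; linarith
        _ = B ^ 3 := by ring
    · rw [← h3]
      simp only [hψ, hwa, map_sum, map_mul, eval_C, eval_sub]
      congr 3
      simp only [Finset.sum_apply, Pi.smul_apply, smul_eq_mul, Finset.sum_mul, Finset.mul_sum]
      rw [Finset.sum_comm]
      exact Finset.sum_congr rfl fun k _ => Finset.sum_congr rfl fun j _ => by ring)
  rw [Finset.card_image_of_injective _ hψinj] at hcount
  refine le_trans ?_ (Nat.cast_le.2 hcount)
  refine le_trans ?_ hAc
  have e1 : (P : ℝ) ^ (Fintype.card (Fin m' ⊕ Fin h')) * ((P : ℝ) ^ 3) ^ ((r : ℝ) / 2 - 1)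
      = (P : ℝ) ^ e := by
    rw [Fintype.card_sum, Fintype.card_fin, Fintype.card_fin, ← Real.rpow_natCast,
      ← Real.rpow_natCast (P : ℝ) 3, ← Real.rpow_mul hPpos.le, ← Real.rpow_add hPpos, he]
    norm_num
  rw [mul_assoc c, mul_assoc c, e1]
  gcongr
  calc (kap / 2) ^ e * B ^ ((r : ℝ) - 2 + 2 / 3 * ((m' + h' : ℕ) : ℝ))
      = (kap / 2) ^ e * (B ^ (2 / 3 : ℝ)) ^ e := by
        rw [← Real.rpow_mul (by linarith)]
        congr 2
        rw [he]; ring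
    _ = (τ / 2) ^ e := by
        rw [← Real.mul_rpow (by positivity) (by positivity)]
        congr 1
        rw [hτ]; ring
    _ ≤ (P : ℝ) ^ e := by gcongr

end CM
end

theorem stmt0 (n h m r : ℕ) (hh : 0 < h) (hhn : h < n) (hm : m = n - h)
    (hr5 : 5 ≤ r) (hrm : r ≤ m)
    (F : MvPolynomial (Fin r) ℤ) (hF2 : F.IsHomogeneous 2)
    (hFpos : ∀ v : Fin r → ℝ, v ≠ 0 → 0 < aeval v F)
    (q : Fin m → MvPolynomial (Fin h) ℤ) (hq : ∀ j, (q j).IsHomogeneous 2)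
    (R : MvPolynomial (Fin h) ℤ) (hR : R.IsHomogeneous 3)
    (hdvd : ∀ i : Fin r, (X ⟨0, hh⟩ : MvPolynomial (Fin h) ℤ) ∣ q (Fin.castLE hrm i)) :
    ∃ c > (0 : ℝ), ∃ B₀ : ℝ, ∀ B : ℝ, B₀ ≤ B →
      c * B ^ ((r : ℝ) - 2 + 2 / 3 * ((n : ℝ) - r - 1)) ≤
        (Set.ncard {p : (Fin m → ℤ) × (Fin h → ℤ) |
          (∀ j, (|p.1 j| : ℝ) ≤ B) ∧ (∀ i, (|p.2 i| : ℝ) ≤ B) ∧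
          p.2 ⟨0, hh⟩ * eval (fun i : Fin r => p.1 (Fin.castLE hrm i)) F
            + ∑ j, p.1 j * eval p.2 (q j) + eval p.2 R = 0} : ℝ) := by
  obtain ⟨m', rfl⟩ := Nat.exists_eq_add_of_le hrm
  obtain ⟨h', rfl⟩ : ∃ h', h = h' + 1 := ⟨h - 1, by omega⟩
  have hn : n = r + (m' + h') + 1 := by omega
  subst hn
  choose l hl using hdvd
  have hl' : ∀ i, q (Fin.castAdd m' i) = X 0 * l i := hl
  have hexp : ((r + (m' + h') + 1 : ℕ) : ℝ) - r - 1 = ((m' + h' : ℕ) : ℝ) := by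
    push_cast; ring
  rw [hexp]
  by_cases hG : ∀ z, eval (CM.opt 0 z) (CM.Epoly q R) = 0
  · refine ⟨1, one_pos, 1, fun B hB => ?_⟩
    rw [one_mul]
    exact CM.main1 hr5 F q R l hl' hG B hB
  · push Not at hG
    obtain ⟨z0, hz0⟩ := hG
    exact CM.main2 hr5 F hF2 hFpos q R hq hR l hl' z0 hz0
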